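/- arXiv:2603.18674 — 10 statements merged into one kernel-verified Lean document; each statement's English description precedes it below -/
import Mathlib

section
/- For every n ≥ 3, the 2-tone chromatic number of the cycle C_n equals 6 if n ∈ {3, 4, 7}, and equals 5 otherwise. -/
/-- A `t`-tone `k`-coloring of a simple graph `G`: each vertex gets a set of `t`
distinct colors from `{1,…,k}`, and any two distinct vertices in the same
connected component share fewer colors than their distance. -/
def IsTToneColoring {V : Type*} (G : SimpleGraph V) (t k : ℕ) (f : V → Finset ℕ) : Prop :=
  (∀ v, f v ⊆ Finset.Icc 1 k ∧ (f v).card = t) ∧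
  ∀ u v : V, u ≠ v → G.Reachable u v → ((f u) ∩ (f v)).card < G.dist u v

/-- The `t`-tone chromatic number: the least `k` admitting a `t`-tone `k`-coloring. -/
noncomputable def toneNumber {V : Type*} (G : SimpleGraph V) (t : ℕ) : ℕ :=
  sInf {k | ∃ f : V → Finset ℕ, IsTToneColoring G t k f}

/-- Closed non-backtracking sequence of pairs. -/
def GoodSeq (k n : ℕ) (g : ℕ → Finset ℕ) : Prop :=
  g n = g 0 ∧ g (n + 1) = g 1 ∧
  ∀ i < n, g i ⊆ Finset.Icc 1 k ∧ (g i).card = 2 ∧ g i ∩ g (i + 1) = ∅ ∧ g i ≠ g (i + 2)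

lemma cyc_adj {n : ℕ} (hn : 3 ≤ n) (u v : Fin n) :
    (SimpleGraph.cycleGraph n).Adj u v ↔
      (u.val + 1 = v.val ∨ (u.val + 1 = n ∧ v.val = 0)) ∨
      (v.val + 1 = u.val ∨ (v.val + 1 = n ∧ u.val = 0)) := by
  rw [SimpleGraph.cycleGraph_adj']
  have hu := u.isLt
  have hv := v.isLt
  have key : ∀ a b : Fin n, (a - b).val = 1 ↔
      (b.val + 1 = a.val ∨ (b.val + 1 = n ∧ a.val = 0)) := by
    intro a b
    have ha := a.isLt
    have hb := b.isLt
    rw [Fin.val_sub]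
    by_cases h : b.val ≤ a.val
    · have : n - b.val + a.val = (a.val - b.val) + n := by omega
      rw [this, Nat.add_mod_right, Nat.mod_eq_of_lt (by omega)]
      omega
    · rw [Nat.mod_eq_of_lt (by omega)]
      omega
  rw [key, key]
  tauto

lemma good_coloring {k n : ℕ} (hn : 3 ≤ n) (g : ℕ → Finset ℕ) (hg : GoodSeq k n g) :
    IsTToneColoring (SimpleGraph.cycleGraph n) 2 k (fun v => g v.val) := by
  obtain ⟨h0, h1, h⟩ := hg
  have nxt : ∀ u v : Fin n, (u.val + 1 = v.val ∨ (u.val + 1 = n ∧ v.val = 0)) →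
      g (u.val + 1) = g v.val ∧ g (u.val + 2) = g (v.val + 1) := by
    rintro u v (e | ⟨e, e'⟩)
    · rw [← e]; exact ⟨rfl, rfl⟩
    · rw [e, e', show u.val + 2 = n + 1 by omega]; exact ⟨h0, h1⟩
  refine ⟨fun v => ⟨(h v v.isLt).1, (h v v.isLt).2.1⟩, ?_⟩
  intro u v huv hr
  have hpos := hr.pos_dist_of_ne huv
  have hcu := (h u u.isLt).2.1
  have hcv := (h v v.isLt).2.1
  have hle : (g u.val ∩ g v.val).card ≤ 2 := hcu ▸ Finset.card_le_card Finset.inter_subset_left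
  show (g u.val ∩ g v.val).card < _
  rcases Nat.lt_or_ge 2 ((SimpleGraph.cycleGraph n).dist u v) with h3 | h3
  · omega
  obtain ⟨p, hp⟩ := hr.exists_walk_length_eq_dist
  match p, hp with
  | .nil, _ => exact absurd rfl huv
  | .cons a .nil, hp =>
    rw [← hp]
    have : g u.val ∩ g v.val = ∅ := by
      rcases (cyc_adj hn u v).1 a with e | e
      · rw [← (nxt u v e).1]; exact (h u u.isLt).2.2.1
      · rw [← (nxt v u e).1, Finset.inter_comm]; exact (h v v.isLt).2.2.1
    simp [this]
  | .cons (v := w) a (.cons b .nil), hp =>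
    rw [← hp]
    have hne : g u.val ≠ g v.val := by
      have huv' : u.val ≠ v.val := fun e => huv (Fin.ext e)
      rcases (cyc_adj hn u w).1 a with e | e <;> rcases (cyc_adj hn w v).1 b with e' | e'
      · rw [← (nxt w v e').1, ← (nxt u w e).2]; exact (h u u.isLt).2.2.2
      · omega
      · omega
      · rw [← (nxt w u e).1, ← (nxt v w e').2]; exact ((h v v.isLt).2.2.2).symm
    rcases Nat.lt_or_ge (g u.val ∩ g v.val).card 2 with h4 | h4
    · simpa using h4
    · exfalso
      apply hne
      have e1 := Finset.eq_of_subset_of_card_le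
        (Finset.inter_subset_left : g u.val ∩ g v.val ⊆ g u.val) (by omega)
      have e2 := Finset.eq_of_subset_of_card_le
        (Finset.inter_subset_right : g u.val ∩ g v.val ⊆ g v.val) (by omega)
      exact e1.symm.trans e2
  | .cons _ (.cons _ (.cons _ q)), hp =>
    simp at hp; omega

lemma goodList (k n : ℕ) (L : List (Finset ℕ))
    (h : (L.getD n ∅ = L.getD 0 ∅ ∧ L.getD (n + 1) ∅ = L.getD 1 ∅) ∧
      ∀ i < n, L.getD i ∅ ⊆ Finset.Icc 1 k ∧ (L.getD i ∅).card = 2 ∧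
        L.getD i ∅ ∩ L.getD (i + 1) ∅ = ∅ ∧ L.getD i ∅ ≠ L.getD (i + 2) ∅) :
    GoodSeq k n (fun i => L.getD i ∅) := ⟨h.1.1, h.1.2, h.2⟩

/-- Five-color sequences starting at a fixed arc. -/
def P5 (n : ℕ) : Prop := ∃ g, GoodSeq 5 n g ∧ g 0 = {1, 2} ∧ g 1 = {3, 4}

lemma p5_5 : P5 5 :=
  ⟨_, goodList 5 5 [{1,2},{3,4},{1,5},{2,3},{4,5},{1,2},{3,4}] (by decide), rfl, rfl⟩
lemma p5_6 : P5 6 :=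
  ⟨_, goodList 5 6 [{1,2},{3,4},{1,5},{2,4},{1,3},{4,5},{1,2},{3,4}] (by decide), rfl, rfl⟩
lemma p5_8 : P5 8 :=
  ⟨_, goodList 5 8 [{1,2},{3,4},{1,5},{2,3},{1,4},{2,5},{1,3},{4,5},{1,2},{3,4}] (by decide),
    rfl, rfl⟩
lemma p5_9 : P5 9 :=
  ⟨_, goodList 5 9 [{1,2},{3,4},{1,5},{2,3},{1,4},{2,5},{1,3},{2,4},{3,5},{1,2},{3,4}]
    (by decide), rfl, rfl⟩
lemma p5_12 : P5 12 :=
  ⟨_, goodList 5 12 [{1,2},{3,4},{1,5},{2,4},{1,3},{4,5},{1,2},{3,4},{1,5},{2,4},{1,3},{4,5},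
    {1,2},{3,4}] (by decide), rfl, rfl⟩

lemma p5_step {n : ℕ} (h : P5 n) : P5 (n + 5) := by
  obtain ⟨g, ⟨hn0, hn1, hg⟩, h0, h1⟩ := h
  obtain ⟨c, ⟨hc0, hc1, hc⟩, c0, c1⟩ := p5_5
  refine ⟨fun i => if i < 5 then c i else g (i - 5), ⟨?_, ?_, ?_⟩, by simpa using c0,
    by simpa using c1⟩
  · simp [hn0, h0, c0]
  · have : n + 5 + 1 - 5 = n + 1 := by omega
    simp [this, hn1, h1, c1, show ¬ (n + 5 + 1 < 5) by omega]
  · have key : ∀ i < 7, (if i < 5 then c i else g (i - 5)) = c i := by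
      intro i hi
      split_ifs with h5
      · rfl
      · obtain rfl | rfl : i = 5 ∨ i = 6 := by omega
        · simp [h0, hc0, c0]
        · simp [h1, hc1, c1]
    intro i hi
    by_cases h5 : i < 5
    · simp only [key i (by omega), key (i+1) (by omega), key (i+2) (by omega)]
      exact hc i h5
    · obtain ⟨j, rfl⟩ : ∃ j, i = j + 5 := ⟨i - 5, by omega⟩
      have := hg j (by omega)
      simp only [h5, if_false, show ¬ (j + 5 + 1 < 5) by omega, show ¬ (j + 5 + 2 < 5) by omega,
        show j + 5 - 5 = j by omega, show j + 5 + 1 - 5 = j + 1 by omega,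
        show j + 5 + 2 - 5 = j + 2 by omega]
      exact this

lemma p5_all (n : ℕ) (h5 : 5 ≤ n) (h7 : n ≠ 7) : P5 n := by
  induction n using Nat.strong_induction_on with
  | _ n ih =>
    by_cases hb : n = 5 ∨ n = 6 ∨ n = 8 ∨ n = 9 ∨ n = 12
    · rcases hb with rfl | rfl | rfl | rfl | rfl
      exacts [p5_5, p5_6, p5_8, p5_9, p5_12]
    · have := p5_step (ih (n - 5) (by omega) (by omega) (by omega))
      rwa [show n - 5 + 5 = n by omega] at this

section lower
variable {n k : ℕ} {f : Fin n → Finset ℕ}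

lemma col_adj (hf : IsTToneColoring (SimpleGraph.cycleGraph n) 2 k f) {u v : Fin n}
    (h : (SimpleGraph.cycleGraph n).Adj u v) : Disjoint (f u) (f v) := by
  have := hf.2 u v h.ne h.reachable
  rw [SimpleGraph.dist_eq_one_iff_adj.2 h] at this
  rw [Finset.disjoint_iff_inter_eq_empty, ← Finset.card_eq_zero]
  omega

lemma col_two (hf : IsTToneColoring (SimpleGraph.cycleGraph n) 2 k f) {u v w : Fin n}
    (h : (SimpleGraph.cycleGraph n).Adj u w) (h' : (SimpleGraph.cycleGraph n).Adj w v)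
    (hne : u ≠ v) : f u ≠ f v := by
  intro e
  have h1 := hf.2 u v hne (h.reachable.trans h'.reachable)
  have h2 := SimpleGraph.dist_le (SimpleGraph.Walk.cons h (.cons h' .nil))
  rw [e, Finset.inter_self, (hf.1 v).2] at h1
  simp at h2
  omega

lemma lower5 (hn : 3 ≤ n) (hf : IsTToneColoring (SimpleGraph.cycleGraph n) 2 k f) : 5 ≤ k := by
  have a01 : (SimpleGraph.cycleGraph n).Adj ⟨0, by omega⟩ ⟨1, by omega⟩ := by
    rw [cyc_adj hn]; simp
  have a12 : (SimpleGraph.cycleGraph n).Adj ⟨1, by omega⟩ ⟨2, by omega⟩ := by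
    rw [cyc_adj hn]; simp
  have d01 := col_adj hf a01
  have d12 := col_adj hf a12
  have ne := col_two hf a01 a12 (by simp)
  generalize (⟨0, by omega⟩ : Fin n) = x at *
  generalize (⟨1, by omega⟩ : Fin n) = y at *
  generalize (⟨2, by omega⟩ : Fin n) = z at *
  obtain ⟨sx, cx⟩ := hf.1 x
  obtain ⟨sy, cy⟩ := hf.1 y
  obtain ⟨sz, cz⟩ := hf.1 z
  have h3 : 3 ≤ (f x ∪ f z).card := by
    by_contra hlt
    have e1 := Finset.eq_of_subset_of_card_le
      (Finset.subset_union_left : f x ⊆ f x ∪ f z) (by omega)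
    have e2 := Finset.eq_of_subset_of_card_le
      (Finset.subset_union_right : f z ⊆ f x ∪ f z) (by omega)
    exact ne (e1.trans e2.symm)
  have hd : Disjoint (f x ∪ f z) (f y) := Finset.disjoint_union_left.2 ⟨d01, d12.symm⟩
  have hs := Finset.card_le_card (Finset.union_subset (Finset.union_subset sx sz) sy)
  rw [Finset.card_union_of_disjoint hd, Nat.card_Icc] at hs
  omega

end lower

/-- The ten pairs from `{1,…,5}`. -/
def pr (i : Fin 10) : Finset ℕ :=
  (![{1,2},{1,3},{1,4},{1,5},{2,3},{2,4},{2,5},{3,4},{3,5},{4,5}] : Fin 10 → Finset ℕ) i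

/-- Disjointness of the ten pairs (the Petersen graph). -/
def pa (i j : Fin 10) : Bool :=
  ((![3, 5, 9, 17, 6, 10, 18, 12, 20, 24] : Fin 10 → ℕ) i &&&
    (![3, 5, 9, 17, 6, 10, 18, 12, 20, 24] : Fin 10 → ℕ) j) == 0

lemma pa_of_disj : ∀ i j : Fin 10, Disjoint (pr i) (pr j) → pa i j = true := by decide

lemma pr_surj : ∀ s ∈ Finset.powersetCard 2 (Finset.Icc 1 5), ∃ i, s = pr i := by decide

lemma no4 : ∀ a b : Fin 10, pa a b = true → ∀ c, pa b c = true → a ≠ c → ∀ d, pa c d = true →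
    b ≠ d → pa d a = true → False := by decide

set_option maxRecDepth 100000 in
lemma no7 : ∀ a b : Fin 10, pa a b = true → ∀ c, pa b c = true → a ≠ c → ∀ d, pa c d = true →
    b ≠ d → ∀ e, pa d e = true → c ≠ e → ∀ f, pa e f = true → d ≠ f → ∀ g, pa f g = true →
    e ≠ g → pa g a = true → f ≠ a → g ≠ b → False := by decide +kernel

lemma pr_of_col {n k : ℕ} {f : Fin n → Finset ℕ} (hk : k < 6)
    (hf : IsTToneColoring (SimpleGraph.cycleGraph n) 2 k f) : ∃ c : Fin n → Fin 10,
      ∀ v, f v = pr (c v) := by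
  have : ∀ v, ∃ i, f v = pr i := fun v => pr_surj _ (Finset.mem_powersetCard.2
    ⟨(hf.1 v).1.trans (Finset.Icc_subset_Icc_right (by omega)), (hf.1 v).2⟩)
  exact ⟨fun v => (this v).choose, fun v => (this v).choose_spec⟩

lemma lower6 {n k : ℕ} {f : Fin n → Finset ℕ} (h : n = 3 ∨ n = 4 ∨ n = 7)
    (hf : IsTToneColoring (SimpleGraph.cycleGraph n) 2 k f) : 6 ≤ k := by
  by_contra hk
  obtain ⟨c, hc⟩ := pr_of_col (by omega) hf
  have A : ∀ u v, (SimpleGraph.cycleGraph n).Adj u v → pa (c u) (c v) = true := by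
    intro u v a
    have := col_adj hf a
    rw [hc, hc] at this
    exact pa_of_disj _ _ this
  have B : ∀ u w v, (SimpleGraph.cycleGraph n).Adj u w → (SimpleGraph.cycleGraph n).Adj w v →
      u ≠ v → c u ≠ c v := by
    intro u w v a b hne e
    have := col_two hf a b hne
    rw [hc, hc, e] at this
    exact this rfl
  rcases h with rfl | rfl | rfl
  · have no3 : ∀ a b : Fin 10, pa a b = true → ∀ c, pa b c = true → pa c a = true → False := by
      decide
    exact no3 _ _ (A 0 1 (by decide)) _ (A 1 2 (by decide)) (A 2 0 (by decide))
  · exact no4 _ _ (A 0 1 (by decide)) _ (A 1 2 (by decide))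
      (B 0 1 2 (by decide) (by decide) (by decide)) _ (A 2 3 (by decide))
      (B 1 2 3 (by decide) (by decide) (by decide)) (A 3 0 (by decide))
  · exact no7 _ _ (A 0 1 (by decide)) _ (A 1 2 (by decide))
      (B 0 1 2 (by decide) (by decide) (by decide)) _ (A 2 3 (by decide))
      (B 1 2 3 (by decide) (by decide) (by decide)) _ (A 3 4 (by decide))
      (B 2 3 4 (by decide) (by decide) (by decide)) _ (A 4 5 (by decide))
      (B 3 4 5 (by decide) (by decide) (by decide)) _ (A 5 6 (by decide))
      (B 4 5 6 (by decide) (by decide) (by decide)) (A 6 0 (by decide))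
      (B 5 6 0 (by decide) (by decide) (by decide))
      (B 6 0 1 (by decide) (by decide) (by decide))

lemma upper6 {n : ℕ} (h : n = 3 ∨ n = 4 ∨ n = 7) : ∃ g, GoodSeq 6 n g := by
  rcases h with rfl | rfl | rfl
  · exact ⟨_, goodList 6 3 [{1,2},{3,4},{5,6},{1,2},{3,4}] (by decide)⟩
  · exact ⟨_, goodList 6 4 [{1,2},{3,4},{1,5},{3,6},{1,2},{3,4}] (by decide)⟩
  · exact ⟨_, goodList 6 7 [{1,2},{3,4},{1,5},{2,4},{1,6},{3,5},{4,6},{1,2},{3,4}] (by decide)⟩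

lemma tone_eq {n m : ℕ} (hn : 3 ≤ n) (h : ∃ g, GoodSeq m n g)
    (hl : ∀ k f, IsTToneColoring (SimpleGraph.cycleGraph n) 2 k f → m ≤ k) :
    toneNumber (SimpleGraph.cycleGraph n) 2 = m := by
  obtain ⟨g, hg⟩ := h
  have hmem : m ∈ {k | ∃ f, IsTToneColoring (SimpleGraph.cycleGraph n) 2 k f} :=
    ⟨_, good_coloring hn g hg⟩
  apply le_antisymm
  · exact Nat.sInf_le hmem
  · obtain ⟨f, hf⟩ := Nat.sInf_mem ⟨m, hmem⟩
    exact hl _ f hf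

/-- For `n ≥ 3`, `τ₂(C_n) = 6` if `n ∈ {3,4,7}` and `τ₂(C_n) = 5` otherwise. -/
theorem stmt3 (n : ℕ) (hn : 3 ≤ n) :
    toneNumber (SimpleGraph.cycleGraph n) 2 =
      if n = 3 ∨ n = 4 ∨ n = 7 then 6 else 5 := by
  split_ifs with h
  · exact tone_eq hn (upper6 h) fun k f hf => lower6 h hf
  · obtain ⟨g, hg, -⟩ := p5_all n (by omega) (by omega)
    exact tone_eq hn ⟨g, hg⟩ fun k f hf => lower5 hn hf
end

section
/- Let G be a finite simple graph and let f be a 2-tone 5-coloring of G. Then any two vertices of G at distance exactly two share exactly one common color; that is, every 2-tone 5-coloring of G is a good 2-tone 5-coloring. -/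
/-- Every 2-tone 5-coloring of a finite simple graph is a good 2-tone 5-coloring:
any two vertices at distance exactly two share exactly one common color. -/
theorem stmt4 {V : Type*} [Fintype V] (G : SimpleGraph V) (f : V → Finset ℕ)
    (hf : IsTToneColoring G 2 5 f) :
    ∀ u v : V, G.dist u v = 2 → ((f u) ∩ (f v)).card = 1 := by
  intro u v h
  obtain ⟨h1, h2⟩ := hf
  have hne : u ≠ v := by rintro rfl; simp at h
  have hr : G.Reachable u v := SimpleGraph.Reachable.of_dist_ne_zero (by omega)
  have hlt := h2 u v hne hr
  obtain ⟨p, hp⟩ := hr.exists_walk_length_eq_dist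
  rw [h] at hp hlt
  obtain ⟨w, hu, hv⟩ : ∃ w, G.Adj u w ∧ G.Adj v w := by
    cases p with
    | nil => simp at hp
    | cons a q => cases q with
      | nil => simp at hp
      | cons b r => cases r with
        | nil => exact ⟨_, a, b.symm⟩
        | cons c s => simp at hp
  have key : ∀ x, G.Adj x w → f x ⊆ Finset.Icc 1 5 \ f w := by
    intro x hx
    have := h2 x w hx.ne hx.reachable
    rw [SimpleGraph.dist_eq_one_iff_adj.2 hx, Nat.lt_one_iff, Finset.card_eq_zero] at this
    exact Finset.subset_sdiff.2 ⟨(h1 x).1, Finset.disjoint_iff_inter_eq_empty.2 this⟩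
  have hc := Finset.card_le_card (Finset.union_subset (key u hu) (key v hv))
  rw [Finset.card_sdiff_of_subset (h1 w).1, (h1 w).2, Nat.card_Icc] at hc
  have := Finset.card_union_add_card_inter (f u) (f v)
  rw [(h1 u).2, (h1 v).2] at this
  omega
end

section
/- For every finite simple graph G and every positive integer k ≥ 3, any 3-good k-coloring of G is a 3-tone k-coloring of G. -/
/-- A 3-good `k`-coloring: each vertex gets a set of three colors from `{1,…,k}`,
adjacent vertices share no colors, and vertices at distance exactly two share
exactly one color. -/
def Is3GoodColoring {V : Type*} (G : SimpleGraph V) (k : ℕ) (f : V → Finset ℕ) : Prop :=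
  (∀ v, f v ⊆ Finset.Icc 1 k ∧ (f v).card = 3) ∧
  (∀ u v : V, G.Adj u v → (f u) ∩ (f v) = ∅) ∧
  (∀ u v : V, G.dist u v = 2 → ((f u) ∩ (f v)).card = 1)

/-- Any 3-good `k`-coloring of a finite simple graph is a 3-tone `k`-coloring. -/
theorem stmt6 {V : Type*} [Fintype V] (G : SimpleGraph V) (k : ℕ) (hk : 3 ≤ k)
    (f : V → Finset ℕ) (hf : Is3GoodColoring G k f) :
    IsTToneColoring G 3 k f := by
  obtain ⟨h1, h2, h3⟩ := hf
  refine ⟨h1, fun u v huv hr => ?_⟩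
  have hpos : 0 < G.dist u v := hr.pos_dist_of_ne huv
  have hle : ((f u) ∩ (f v)).card ≤ 3 :=
    (Finset.card_le_card Finset.inter_subset_left).trans (h1 u).2.le
  by_contra hcon
  push Not at hcon
  have hd : G.dist u v = 1 ∨ G.dist u v = 2 ∨ G.dist u v = 3 := by omega
  rcases hd with hd | hd | hd
  · have := h2 u v (SimpleGraph.dist_eq_one_iff_adj.mp hd)
    rw [this, hd] at hcon
    simp at hcon
  · have := h3 u v hd
    omega
  · have hu : f u ∩ f v = f u :=
      Finset.eq_of_subset_of_card_le Finset.inter_subset_left (by rw [(h1 u).2]; omega)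
    have hv : f u ∩ f v = f v :=
      Finset.eq_of_subset_of_card_le Finset.inter_subset_right (by rw [(h1 v).2]; omega)
    have he : f u = f v := hu.symm.trans hv
    obtain ⟨p, hp⟩ := hr.exists_walk_length_eq_dist
    cases p with
    | nil => exact huv rfl
    | @cons _ b _ hub q =>
      have hq : q.length = 2 := by
        rw [SimpleGraph.Walk.length_cons] at hp
        omega
      have hb1 : G.dist b v ≤ 2 := hq ▸ SimpleGraph.dist_le q
      have hb2 : ¬ G.dist b v < 2 := by
        intro hlt
        obtain ⟨r, hr'⟩ := q.reachable.exists_walk_length_eq_dist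
        have := SimpleGraph.dist_le (SimpleGraph.Walk.cons hub r)
        rw [SimpleGraph.Walk.length_cons] at this
        omega
      have hb := h3 b v (by omega)
      rw [← he, Finset.inter_comm, h2 u b hub] at hb
      simp at hb
end

section
/- For every finite tree T with at least two vertices and maximum degree Δ, the 2-tone chromatic number of T equals ⌈(5 + √(8Δ + 1))/2⌉. -/
theorem key_num (D k : ℕ) (hD : 1 ≤ D) :
    ⌈(5 + Real.sqrt (8 * (D : ℝ) + 1)) / 2⌉₊ ≤ k ↔ (2 ≤ k ∧ D ≤ (k - 2).choose 2) := by
  rw [Nat.ceil_le]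
  have hs : 0 ≤ Real.sqrt (8 * (D : ℝ) + 1) := Real.sqrt_nonneg _
  by_cases hk : 3 ≤ k
  · obtain ⟨m, rfl⟩ := Nat.exists_eq_add_of_le hk
    have e : 3 + m - 2 = m + 1 := by omega
    rw [e]
    have hc : (m + 1).choose 2 * 2 = (m + 1) * m := by
      rw [Nat.choose_two_right]
      exact Nat.div_mul_cancel (by simpa using (Nat.even_mul_pred_self (m + 1)).two_dvd)
    have h1 : (5 + Real.sqrt (8 * (D : ℝ) + 1)) / 2 ≤ ((3 + m : ℕ) : ℝ) ↔
        Real.sqrt (8 * (D : ℝ) + 1) ≤ 2 * m + 1 := by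
      push_cast
      constructor <;> intro h <;> linarith
    rw [h1, Real.sqrt_le_left (by positivity)]
    have h2 : (8 * (D : ℝ) + 1 ≤ (2 * m + 1) ^ 2) ↔ 8 * D + 1 ≤ (2 * m + 1) ^ 2 := by
      norm_cast
    rw [h2]
    constructor
    · intro h
      refine ⟨by omega, ?_⟩
      nlinarith
    · rintro ⟨-, h⟩
      nlinarith
  · constructor
    · intro h
      exfalso
      have : (k : ℝ) ≤ 2 := by exact_mod_cast (by omega : k ≤ 2)
      linarith
    · rintro ⟨h, h'⟩
      have : k = 2 := by omega
      subst this
      simp at h'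
      omega

/-- Local form of the coloring on trees, by removing leaves. -/
theorem tree_color (D k : ℕ) (hk : 2 ≤ k) (hD : D ≤ (k - 2).choose 2) (n : ℕ) :
    ∀ {V : Type*} [Fintype V] (G : SimpleGraph V), Fintype.card V = n → G.IsTree →
      (∀ p (s : Finset V), (∀ x ∈ s, G.Adj p x) → s.card ≤ D) →
      ∃ f : V → Finset ℕ, (∀ v, f v ⊆ Finset.Icc 1 k ∧ (f v).card = 2) ∧
        (∀ u v, G.Adj u v → Disjoint (f u) (f v)) ∧
        (∀ p u v, G.Adj p u → G.Adj p v → u ≠ v → f u ≠ f v) := by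
  classical
  induction n with
  | zero =>
    intro V _ G hc hT _
    have := hT.connected.nonempty
    exact absurd hc Fintype.card_ne_zero
  | succ n ih =>
    intro V _ G hc hT hdeg
    rcases subsingleton_or_nontrivial V with hs | hn
    · refine ⟨fun _ => {1, 2}, ?_, ?_, ?_⟩
      · intro v
        constructor
        · intro x hx
          simp at hx ⊢
          omega
        · simp
      · intro u v h
        exact absurd (Subsingleton.elim u v) h.ne
      · intro p u v _ _ h
        exact absurd (Subsingleton.elim u v) h
    · obtain ⟨v, hv⟩ := hT.exists_vert_degree_one_of_nontrivial
      obtain ⟨p, hvp, hp⟩ := SimpleGraph.degree_eq_one_iff_existsUnique_adj.mp hv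
      have hT' : (G.induce ({v}ᶜ : Set V)).IsTree :=
        ⟨hT.connected.induce_compl_singleton_of_degree_eq_one hv, hT.isAcyclic.induce _⟩
      have hc' : Fintype.card (({v}ᶜ : Set V)) = n := by
        rw [Fintype.card_compl_set, hc]; simp
      obtain ⟨f, hf1, hf2, hf3⟩ := ih (G.induce ({v}ᶜ : Set V)) hc' hT' (by
        intro q s hs
        have := hdeg q.1 (s.map ⟨Subtype.val, Subtype.val_injective⟩) (by
          intro x hx
          simp only [Finset.mem_map, Function.Embedding.coeFn_mk] at hx
          obtain ⟨y, hy, rfl⟩ := hx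
          exact hs y hy)
        simpa using this)
      have hpv : p ≠ v := hvp.ne'
      let p' : ({v}ᶜ : Set V) := ⟨p, hpv⟩
      let T : Finset ({v}ᶜ : Set V) := Finset.univ.filter (fun x => G.Adj p x.1)
      have hTc : T.card + 1 ≤ D := by
        have := hdeg p (insert v (T.map ⟨Subtype.val, Subtype.val_injective⟩)) (by
          intro x hx
          rw [Finset.mem_insert] at hx
          rcases hx with rfl | hx
          · exact hvp.symm
          · simp only [Finset.mem_map, Function.Embedding.coeFn_mk] at hx
            obtain ⟨y, hy, rfl⟩ := hx
            exact (Finset.mem_filter.1 hy).2)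
        rw [Finset.card_insert_of_notMem] at this
        · simpa using this
        · intro hx
          simp only [Finset.mem_map, Function.Embedding.coeFn_mk] at hx
          obtain ⟨y, hy, h⟩ := hx
          exact y.2 h
      have hlt : (T.image f).card < ((Finset.Icc 1 k \ f p').powersetCard 2).card := by
        rw [Finset.card_powersetCard, Finset.card_sdiff_of_subset (hf1 p').1, (hf1 p').2]
        have := Finset.card_image_le (s := T) (f := f)
        simp only [Nat.card_Icc, Nat.add_sub_cancel]
        omega
      obtain ⟨c, hc1, hc2⟩ := Finset.exists_mem_notMem_of_card_lt_card hlt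
      rw [Finset.mem_powersetCard] at hc1
      have hdis : Disjoint c (f p') :=
        Finset.disjoint_of_subset_left hc1.1 Finset.sdiff_disjoint
      have hne : ∀ x : ({v}ᶜ : Set V), G.Adj p x.1 → f x ≠ c := by
        intro x hx h
        exact hc2 (Finset.mem_image.2 ⟨x, by simp [T, hx], h⟩)
      refine ⟨fun x => if h : x = v then c else f ⟨x, h⟩, ?_, ?_, ?_⟩
      · intro x
        by_cases h : x = v
        · simp only [h, dite_true]
          exact ⟨hc1.1.trans Finset.sdiff_subset, hc1.2⟩
        · simp only [h, dite_false]
          exact hf1 _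
      · intro x y hxy
        by_cases hx : x = v
        · subst hx
          have := hp y hxy
          subst this
          simp only [hpv, dite_true, dite_false]
          exact hdis
        · by_cases hy : y = v
          · subst hy
            have := hp x hxy.symm
            subst this
            simp only [hpv, dite_true, dite_false]
            exact hdis.symm
          · simp only [hx, hy, dite_false]
            exact hf2 _ _ hxy
      · intro q x y hqx hqy hxy
        by_cases hx : x = v
        · subst hx
          have := hp q hqx.symm
          subst this
          simp only [hxy.symm, dite_true, dite_false]
          exact (hne ⟨y, hxy.symm⟩ hqy).symm
        · by_cases hy : y = v
          · subst hy
            have := hp q hqy.symm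
            subst this
            simp only [hxy, dite_true, dite_false]
            exact hne ⟨x, hxy⟩ hqx
          · simp only [hx, hy, dite_false]
            by_cases hq : q = v
            · subst hq
              exact absurd ((hp x hqx).trans (hp y hqy).symm) hxy
            · exact hf3 ⟨q, hq⟩ ⟨x, hx⟩ ⟨y, hy⟩ hqx hqy
                (fun h => hxy (congrArg Subtype.val h))

/-- For every finite tree `T` with at least two vertices and maximum degree `Δ`,
`τ₂(T) = ⌈(5 + √(8Δ + 1))/2⌉`. -/
theorem stmt8 {V : Type*} [Fintype V] (G : SimpleGraph V) [DecidableRel G.Adj]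
    (hT : G.IsTree) (hcard : 2 ≤ Fintype.card V) :
    toneNumber G 2 = ⌈(5 + Real.sqrt (8 * (G.maxDegree : ℝ) + 1)) / 2⌉₊ := by
  classical
  have hnt : Nontrivial V := Fintype.one_lt_card_iff_nontrivial.1 hcard
  have hD : 1 ≤ G.maxDegree := by
    obtain ⟨v, hv⟩ := hT.exists_vert_degree_one_of_nontrivial
    exact hv ▸ G.degree_le_maxDegree v
  have hmem : ⌈(5 + Real.sqrt (8 * (G.maxDegree : ℝ) + 1)) / 2⌉₊ ∈
      {k | ∃ f : V → Finset ℕ, IsTToneColoring G 2 k f} := by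
    obtain ⟨h1, h2⟩ := (key_num G.maxDegree _ hD).1 le_rfl
    obtain ⟨f, hf1, hf2, hf3⟩ := tree_color G.maxDegree _ h1 h2 _ G rfl hT (by
      intro p s hs
      refine le_trans ?_ (G.degree_le_maxDegree p)
      rw [← SimpleGraph.card_neighborFinset_eq_degree]
      exact Finset.card_le_card (fun x hx => by simpa using hs x hx))
    refine ⟨f, hf1, ?_⟩
    intro u v huv hr
    obtain ⟨w, hw⟩ := hr.exists_walk_length_eq_dist
    rw [← hw]
    have hle : (f u ∩ f v).card ≤ 2 := (hf1 u).2 ▸ Finset.card_le_card Finset.inter_subset_left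
    match w with
    | .nil => exact absurd rfl huv
    | .cons h .nil =>
      simp [Finset.disjoint_iff_inter_eq_empty.1 (hf2 _ _ h)]
    | .cons h (.cons h' .nil) =>
      have hne := hf3 _ _ _ h.symm h' huv
      simp only [SimpleGraph.Walk.length_cons, SimpleGraph.Walk.length_nil]
      refine lt_of_le_of_ne hle ?_
      intro heq
      apply hne
      have e1 : f u ∩ f v = f u :=
        Finset.eq_of_subset_of_card_le Finset.inter_subset_left (by rw [(hf1 u).2]; omega)
      have e2 : f u ∩ f v = f v :=
        Finset.eq_of_subset_of_card_le Finset.inter_subset_right (by rw [(hf1 v).2]; omega)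
      exact e1.symm.trans e2
    | .cons h (.cons h' (.cons h'' w')) =>
      simp only [SimpleGraph.Walk.length_cons]
      omega
  apply le_antisymm
  · exact Nat.sInf_le hmem
  · apply le_csInf ⟨_, hmem⟩
    rintro k ⟨f, hf1, hf2⟩
    rw [key_num _ _ hD]
    obtain ⟨p, hp⟩ := G.exists_maximal_degree_vertex
    have hk : 2 ≤ k := by
      have := Finset.card_le_card (hf1 p).1
      rw [(hf1 p).2] at this
      simpa using this
    refine ⟨hk, ?_⟩
    have hc : ((Finset.Icc 1 k \ f p).powersetCard 2).card = (k - 2).choose 2 := by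
      rw [Finset.card_powersetCard, Finset.card_sdiff_of_subset (hf1 p).1, (hf1 p).2]
      simp
    rw [hp, ← hc, ← SimpleGraph.card_neighborFinset_eq_degree]
    apply Finset.card_le_card_of_injOn f
    · intro x hx
      have hx' : G.Adj p x := by simpa using hx
      have := hf2 p x hx'.ne hx'.reachable
      rw [SimpleGraph.dist_eq_one_iff_adj.2 hx', Nat.lt_one_iff, Finset.card_eq_zero,
        ← Finset.disjoint_iff_inter_eq_empty] at this
      exact Finset.mem_powersetCard.2 ⟨Finset.subset_sdiff.2 ⟨(hf1 x).1, this.symm⟩, (hf1 x).2⟩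
    · intro x hx y hy hxy
      have hx' : G.Adj p x := by simpa using hx
      have hy' : G.Adj p y := by simpa using hy
      by_contra hne
      have h := hf2 x y hne (hx'.symm.reachable.trans hy'.reachable)
      have h2 : G.dist x y ≤ 2 :=
        SimpleGraph.dist_le (.cons hx'.symm (.cons hy' .nil))
      rw [hxy, Finset.inter_self, (hf1 y).2] at h
      omega
end

section
/- Every finite tree with at least two vertices and maximum degree at most 3 admits a 2-tone 5-coloring. -/
lemma tone_aux (n : ℕ) : ∀ {V : Type*} [Fintype V] (G : SimpleGraph V), Fintype.card V = n →
    G.IsTree → (∀ x (s : Finset V), (∀ y ∈ s, G.Adj x y) → s.card ≤ 3) →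
    ∃ f : V → Finset ℕ, (∀ v, f v ⊆ Finset.Icc 1 5 ∧ (f v).card = 2) ∧
      (∀ u v, G.Adj u v → Disjoint (f u) (f v)) ∧
      (∀ u v w, G.Adj u v → G.Adj u w → v ≠ w → f v ≠ f w) := by
  induction n with
  | zero =>
    intro V _ G hn hT _
    have := hT.connected.nonempty
    have := Fintype.card_pos (α := V)
    omega
  | succ n ih =>
    intro V _ G hn hT hd
    classical
    rcases subsingleton_or_nontrivial V with hV | hV
    · refine ⟨fun _ => {1, 2}, fun v => (by decide : ({1, 2} : Finset ℕ) ⊆ Finset.Icc 1 5 ∧ ({1, 2} : Finset ℕ).card = 2), fun u v h => ?_, fun u v w _ _ h => ?_⟩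
      · exact absurd (Subsingleton.elim u v) h.ne
      · exact absurd (Subsingleton.elim v w) h
    obtain ⟨v, hv⟩ := hT.exists_vert_degree_one_of_nontrivial
    obtain ⟨u, hvu, huniq⟩ := SimpleGraph.degree_eq_one_iff_existsUnique_adj.mp hv
    simp only at huniq
    have huv : u ≠ v := hvu.ne'
    have hT' : (G.induce ({v}ᶜ : Set V)).IsTree :=
      ⟨hT.connected.induce_compl_singleton_of_degree_eq_one hv, hT.isAcyclic.induce _⟩
    have hc : Fintype.card ({v}ᶜ : Set V) = n := by
      rw [Fintype.card_compl_set]; simp [hn]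
    obtain ⟨f, h1, h2, h3⟩ := ih (G.induce ({v}ᶜ : Set V)) hc hT' (by
      intro x s hs
      have := hd x (s.map (Function.Embedding.subtype _)) (by
        intro y hy
        obtain ⟨z, hz, rfl⟩ := Finset.mem_map.mp hy
        exact hs z hz)
      simpa using this)
    let A := f ⟨u, huv⟩
    let N := Finset.univ.filter fun y : ({v}ᶜ : Set V) => G.Adj u y
    have hN : N.card ≤ 2 := by
      have h4 := hd u (insert v (N.map (Function.Embedding.subtype _))) (by
        intro y hy
        rcases Finset.mem_insert.mp hy with rfl | hy
        · exact hvu.symm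
        · obtain ⟨z, hz, rfl⟩ := Finset.mem_map.mp hy
          exact (Finset.mem_filter.mp hz).2)
      rw [Finset.card_insert_of_notMem, Finset.card_map] at h4
      · omega
      · intro hm
        obtain ⟨z, hz, hzv⟩ := Finset.mem_map.mp hm
        exact z.2 hzv
    have hP : (Finset.powersetCard 2 (Finset.Icc 1 5 \ A)).card = 3 := by
      rw [Finset.card_powersetCard, Finset.card_sdiff_of_subset (h1 _).1, (h1 _).2]
      decide
    obtain ⟨c, hcP, hcN⟩ := Finset.exists_mem_notMem_of_card_lt_card
      (s := N.image f) (t := Finset.powersetCard 2 (Finset.Icc 1 5 \ A))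
      (by have := Finset.card_image_le (s := N) (f := f); omega)
    obtain ⟨hcs, hc2⟩ := Finset.mem_powersetCard.mp hcP
    have hcA : Disjoint c A := Finset.disjoint_of_subset_left hcs Finset.sdiff_disjoint
    have hcN' : ∀ y (hy : y ≠ v), G.Adj u y → f ⟨y, hy⟩ ≠ c := fun y hy ha he =>
      hcN (Finset.mem_image.mpr ⟨⟨y, hy⟩, Finset.mem_filter.mpr ⟨Finset.mem_univ _, ha⟩, he⟩)
    let g : V → Finset ℕ := fun x => if h : x ≠ v then f ⟨x, h⟩ else c
    have gv : g v = c := by simp [g]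
    have gx : ∀ x (h : x ≠ v), g x = f ⟨x, h⟩ := fun x h => by simp [g, h]
    refine ⟨g, fun x => ?_, fun x y hxy => ?_, fun x y z hxy hxz hyz => ?_⟩
    · by_cases hx : x = v
      · subst hx; rw [gv]; exact ⟨hcs.trans Finset.sdiff_subset, hc2⟩
      · rw [gx x hx]; exact h1 _
    · by_cases hx : x = v
      · subst hx
        obtain rfl := huniq y hxy
        rw [gv, gx y huv]; exact hcA
      · by_cases hy : y = v
        · subst hy
          obtain rfl := huniq x hxy.symm
          rw [gv, gx x huv]; exact hcA.symm
        · rw [gx x hx, gx y hy]; exact h2 ⟨x, hx⟩ ⟨y, hy⟩ hxy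
    · by_cases hx : x = v
      · subst hx
        exact absurd ((huniq y hxy).trans (huniq z hxz).symm) hyz
      · by_cases hy : y = v
        · subst hy
          obtain rfl := huniq x hxy.symm
          rw [gv, gx z hyz.symm]; exact (hcN' z hyz.symm hxz).symm
        · by_cases hz : z = v
          · subst hz
            obtain rfl := huniq x hxz.symm
            rw [gv, gx y hyz]; exact hcN' y hyz hxy
          · rw [gx y hy, gx z hz]
            exact h3 ⟨x, hx⟩ ⟨y, hy⟩ ⟨z, hz⟩ hxy hxz (fun h => hyz (congrArg Subtype.val h))

/-- Every finite tree with at least two vertices and maximum degree at most 3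
admits a 2-tone 5-coloring. -/
theorem stmt9 {V : Type*} [Fintype V] (G : SimpleGraph V) [DecidableRel G.Adj]
    (hT : G.IsTree) (hcard : 2 ≤ Fintype.card V) (hΔ : G.maxDegree ≤ 3) :
    ∃ f : V → Finset ℕ, IsTToneColoring G 2 5 f := by
  obtain ⟨f, h1, h2, h3⟩ := tone_aux _ G rfl hT (fun x s hs => by
    refine le_trans (Finset.card_le_card (t := G.neighborFinset x) ?_)
      ((G.degree_le_maxDegree x).trans hΔ)
    intro y hy
    simpa using hs y hy)
  refine ⟨f, h1, fun u v huv hr => ?_⟩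
  have hpos := hr.pos_dist_of_ne huv
  have hle : (f u ∩ f v).card ≤ 2 := (Finset.card_le_card Finset.inter_subset_left).trans (h1 u).2.le
  by_cases ha : G.Adj u v
  · rw [Finset.disjoint_iff_inter_eq_empty.mp (h2 u v ha)]; simpa using hpos
  · by_contra hlt
    obtain ⟨p, hp⟩ := hr.exists_walk_length_eq_dist
    have hl : p.length ≤ 2 := by omega
    cases p with
    | nil => exact huv rfl
    | cons h q =>
      cases q with
      | nil => exact ha h
      | cons h' r =>
        cases r with
        | nil =>
          have hne := h3 _ _ _ h.symm h' huv
          have h2' : (f u ∩ f v).card = 2 := by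
            simp only [SimpleGraph.Walk.length_cons, SimpleGraph.Walk.length_nil] at hp
            omega
          have e1 := Finset.eq_of_subset_of_card_le (Finset.inter_subset_left (s₁ := f u) (s₂ := f v))
            (by rw [h2', (h1 u).2])
          have e2 := Finset.eq_of_subset_of_card_le (Finset.inter_subset_right (s₁ := f u) (s₂ := f v))
            (by rw [h2', (h1 v).2])
          exact hne (e1.symm.trans e2)
        | cons _ _ => simp at hl
end

section
/- For the wheel graph W_d = C_d + K₁ with d ≥ 3 (the join of a single vertex with the cycle on d vertices), the 2-tone chromatic number equals 7 if d ∈ {5, 6, 8, 9}; equals 8 if d ∈ {3, 4, 7} or 10 ≤ d ≤ 15; and equals ⌈(5 + √(1 + 8d))/2⌉ if d ≥ 11. -/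
/-- The wheel graph `W_d`: the join of a single hub vertex (`none`) with the
cycle `C_d` on the vertices `some i`. -/
def wheelGraph (d : ℕ) : SimpleGraph (Option (Fin d)) :=
  SimpleGraph.fromRel (fun u v =>
    u = none ∨ ∃ i j : Fin d, u = some i ∧ v = some j ∧ (SimpleGraph.cycleGraph d).Adj i j)

/-- A cyclic sequence of `d` distinct pairs in `S`, consecutive ones disjoint. -/
def Cyc (S : Finset ℕ) (d : ℕ) (g : ℕ → Finset ℕ) : Prop :=
  (∀ i < d, g i ⊆ S ∧ (g i).card = 2) ∧
  (∀ i < d, ∀ j < d, i ≠ j → g i ≠ g j) ∧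
  (∀ i < d, Disjoint (g i) (g ((i + 1) % d)))

def pairs (L : List (ℕ × ℕ)) (i : ℕ) : Finset ℕ :=
  {(L.getD i (0, 0)).1, (L.getD i (0, 0)).2}

theorem Cyc.mono {S T : Finset ℕ} {d : ℕ} {g : ℕ → Finset ℕ} (h : Cyc S d g) (hST : S ⊆ T) :
    Cyc T d g :=
  ⟨fun i hi => ⟨(h.1 i hi).1.trans hST, (h.1 i hi).2⟩, h.2.1, h.2.2⟩

theorem cyc_ex3 : ∃ g, Cyc (Finset.Icc 1 6) 3 g :=
  ⟨pairs [(1, 2), (3, 4), (5, 6)], by unfold Cyc; decide +kernel⟩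

theorem cyc_ex4 : ∃ g, Cyc (Finset.Icc 1 6) 4 g :=
  ⟨pairs [(1, 2), (3, 4), (1, 5), (3, 6)], by unfold Cyc; decide +kernel⟩

theorem cyc_ex5 : ∃ g, Cyc (Finset.Icc 1 5) 5 g :=
  ⟨pairs [(1, 2), (3, 4), (1, 5), (2, 3), (4, 5)], by unfold Cyc; decide +kernel⟩

theorem cyc_ex6 : ∃ g, Cyc (Finset.Icc 1 5) 6 g :=
  ⟨pairs [(1, 2), (3, 4), (1, 5), (2, 3), (1, 4), (3, 5)], by unfold Cyc; decide +kernel⟩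

theorem cyc_ex7 : ∃ g, Cyc (Finset.Icc 1 6) 7 g :=
  ⟨pairs [(1, 2), (3, 4), (5, 6), (1, 3), (2, 4), (1, 5), (3, 6)], by unfold Cyc; decide +kernel⟩

theorem cyc_ex8 : ∃ g, Cyc (Finset.Icc 1 5) 8 g :=
  ⟨pairs [(1, 2), (3, 4), (1, 5), (2, 3), (4, 5), (1, 3), (2, 4), (3, 5)], by unfold Cyc; decide +kernel⟩

theorem cyc_ex9 : ∃ g, Cyc (Finset.Icc 1 5) 9 g :=
  ⟨pairs [(1, 2), (3, 4), (1, 5), (2, 3), (4, 5), (1, 3), (2, 5), (1, 4), (3, 5)], by unfold Cyc; decide +kernel⟩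

theorem cyc_ex10 : ∃ g, Cyc (Finset.Icc 1 6) 10 g :=
  ⟨pairs [(1, 2), (3, 4), (5, 6), (1, 3), (2, 4), (1, 5), (2, 6), (3, 5), (1, 4), (3, 6)], by unfold Cyc; decide +kernel⟩

theorem cyc_ex11 : ∃ g, Cyc (Finset.Icc 1 6) 11 g :=
  ⟨pairs [(1, 2), (3, 4), (5, 6), (1, 3), (2, 4), (1, 5), (2, 6), (3, 5), (4, 6), (2, 3), (4, 5)], by unfold Cyc; decide +kernel⟩

theorem cyc_ex12 : ∃ g, Cyc (Finset.Icc 1 6) 12 g :=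
  ⟨pairs [(1, 2), (3, 4), (5, 6), (1, 3), (2, 4), (1, 5), (2, 6), (3, 5), (4, 6), (2, 3), (1, 4), (3, 6)], by unfold Cyc; decide +kernel⟩

theorem cyc_ex13 : ∃ g, Cyc (Finset.Icc 1 6) 13 g :=
  ⟨pairs [(1, 2), (3, 4), (5, 6), (1, 3), (2, 4), (1, 5), (2, 6), (3, 5), (4, 6), (2, 3), (1, 4), (2, 5), (3, 6)], by unfold Cyc; decide +kernel⟩

theorem cyc_ex14 : ∃ g, Cyc (Finset.Icc 1 6) 14 g :=
  ⟨pairs [(1, 2), (3, 4), (5, 6), (1, 3), (2, 4), (1, 5), (2, 6), (3, 5), (4, 6), (2, 3), (1, 4), (2, 5), (1, 6), (4, 5)], by unfold Cyc; decide +kernel⟩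

theorem cyc_ex15 : ∃ g, Cyc (Finset.Icc 1 6) 15 g :=
  ⟨pairs [(1, 2), (3, 4), (5, 6), (1, 3), (2, 4), (1, 5), (2, 6), (3, 5), (4, 6), (2, 3), (1, 4), (2, 5), (1, 6), (4, 5), (3, 6)], by unfold Cyc; decide +kernel⟩

theorem cyc_ex16 : ∃ g, Cyc (Finset.Icc 1 7) 16 g :=
  ⟨pairs [(1, 2), (3, 4), (5, 6), (1, 7), (2, 3), (4, 5), (6, 7), (1, 3), (2, 4), (5, 7), (1, 6), (2, 5), (3, 6), (4, 7), (1, 5), (3, 7)], by unfold Cyc; decide +kernel⟩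

theorem cyc_ex17 : ∃ g, Cyc (Finset.Icc 1 7) 17 g :=
  ⟨pairs [(1, 2), (3, 4), (5, 6), (1, 7), (2, 3), (4, 5), (6, 7), (1, 3), (2, 4), (5, 7), (1, 6), (2, 5), (3, 6), (4, 7), (1, 5), (2, 6), (3, 7)], by unfold Cyc; decide +kernel⟩

theorem cyc_ex18 : ∃ g, Cyc (Finset.Icc 1 7) 18 g :=
  ⟨pairs [(1, 2), (3, 4), (5, 6), (1, 7), (2, 3), (4, 5), (6, 7), (1, 3), (2, 4), (5, 7), (1, 6), (2, 5), (3, 6), (4, 7), (1, 5), (2, 6), (3, 7), (4, 6)], by unfold Cyc; decide +kernel⟩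

theorem cyc_ex19 : ∃ g, Cyc (Finset.Icc 1 7) 19 g :=
  ⟨pairs [(1, 2), (3, 4), (5, 6), (1, 7), (2, 3), (4, 5), (6, 7), (1, 3), (2, 4), (5, 7), (1, 6), (2, 5), (3, 6), (4, 7), (1, 5), (2, 6), (3, 7), (1, 4), (3, 5)], by unfold Cyc; decide +kernel⟩

theorem cyc_ex20 : ∃ g, Cyc (Finset.Icc 1 7) 20 g :=
  ⟨pairs [(1, 2), (3, 4), (5, 6), (1, 7), (2, 3), (4, 5), (6, 7), (1, 3), (2, 4), (5, 7), (1, 6), (2, 5), (3, 6), (4, 7), (1, 5), (2, 6), (3, 7), (1, 4), (2, 7), (3, 5)], by unfold Cyc; decide +kernel⟩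

theorem cyc_ex21 : ∃ g, Cyc (Finset.Icc 1 7) 21 g :=
  ⟨pairs [(1, 2), (3, 4), (5, 6), (1, 7), (2, 3), (4, 5), (6, 7), (1, 3), (2, 4), (5, 7), (1, 6), (2, 5), (3, 6), (4, 7), (1, 5), (2, 6), (3, 7), (1, 4), (2, 7), (3, 5), (4, 6)], by unfold Cyc; decide +kernel⟩

theorem cyc_ex22 : ∃ g, Cyc (Finset.Icc 1 8) 22 g :=
  ⟨pairs [(1, 2), (3, 4), (5, 6), (7, 8), (1, 3), (2, 4), (5, 7), (6, 8), (1, 4), (2, 3), (5, 8), (6, 7), (1, 5), (2, 6), (3, 7), (4, 8), (1, 6), (2, 5), (3, 8), (4, 7), (1, 8), (3, 5)], by unfold Cyc; decide +kernel⟩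

theorem cyc_ex23 : ∃ g, Cyc (Finset.Icc 1 8) 23 g :=
  ⟨pairs [(1, 2), (3, 4), (5, 6), (7, 8), (1, 3), (2, 4), (5, 7), (6, 8), (1, 4), (2, 3), (5, 8), (6, 7), (1, 5), (2, 6), (3, 7), (4, 8), (1, 6), (2, 5), (3, 8), (4, 7), (1, 8), (2, 7), (3, 5)], by unfold Cyc; decide +kernel⟩

theorem cyc_ex24 : ∃ g, Cyc (Finset.Icc 1 8) 24 g :=
  ⟨pairs [(1, 2), (3, 4), (5, 6), (7, 8), (1, 3), (2, 4), (5, 7), (6, 8), (1, 4), (2, 3), (5, 8), (6, 7), (1, 5), (2, 6), (3, 7), (4, 8), (1, 6), (2, 5), (3, 8), (4, 7), (1, 8), (2, 7), (3, 5), (4, 6)], by unfold Cyc; decide +kernel⟩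

theorem cyc_ex25 : ∃ g, Cyc (Finset.Icc 1 8) 25 g :=
  ⟨pairs [(1, 2), (3, 4), (5, 6), (7, 8), (1, 3), (2, 4), (5, 7), (6, 8), (1, 4), (2, 3), (5, 8), (6, 7), (1, 5), (2, 6), (3, 7), (4, 8), (1, 6), (2, 5), (3, 8), (4, 7), (1, 8), (2, 7), (3, 5), (1, 7), (4, 6)], by unfold Cyc; decide +kernel⟩

theorem cyc_ex29 : ∃ g, Cyc (Finset.Icc 1 9) 29 g :=
  ⟨pairs [(1, 2), (3, 4), (5, 6), (7, 8), (1, 9), (2, 3), (4, 5), (6, 7), (8, 9), (1, 3), (2, 4), (5, 7), (6, 8), (2, 9), (1, 4), (3, 5), (6, 9), (1, 7), (2, 8), (3, 6), (4, 7), (5, 8), (3, 9), (1, 5), (2, 6), (4, 8), (7, 9), (1, 6), (3, 7)], by unfold Cyc; decide +kernel⟩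

def pet : List ℕ := [3, 5, 9, 17, 6, 10, 18, 12, 20, 24]

theorem pet3 :
    ∀ v0 ∈ pet, 
    ∀ v1 ∈ pet, v0 &&& v1 = 0 → 
    ∀ v2 ∈ pet, v1 &&& v2 = 0 → v0 ≠ v2 → 
    v2 &&& v0 ≠ 0 := by decide +kernel

theorem pet4 :
    ∀ v0 ∈ pet, 
    ∀ v1 ∈ pet, v0 &&& v1 = 0 → 
    ∀ v2 ∈ pet, v1 &&& v2 = 0 → v0 ≠ v2 → 
    ∀ v3 ∈ pet, v2 &&& v3 = 0 → v0 ≠ v3 → v1 ≠ v3 → 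
    v3 &&& v0 ≠ 0 := by decide +kernel

set_option synthInstance.maxSize 100000 in
set_option synthInstance.maxHeartbeats 1000000 in
set_option maxRecDepth 10000 in
theorem pet7 :
    ∀ v0 ∈ pet, 
    ∀ v1 ∈ pet, v0 &&& v1 = 0 → 
    ∀ v2 ∈ pet, v1 &&& v2 = 0 → v0 ≠ v2 → 
    ∀ v3 ∈ pet, v2 &&& v3 = 0 → v0 ≠ v3 → v1 ≠ v3 → 
    ∀ v4 ∈ pet, v3 &&& v4 = 0 → v0 ≠ v4 → v1 ≠ v4 → v2 ≠ v4 → 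
    ∀ v5 ∈ pet, v4 &&& v5 = 0 → v0 ≠ v5 → v1 ≠ v5 → v2 ≠ v5 → v3 ≠ v5 → 
    ∀ v6 ∈ pet, v5 &&& v6 = 0 → v0 ≠ v6 → v1 ≠ v6 → v2 ≠ v6 → v3 ≠ v6 → v4 ≠ v6 → 
    v6 &&& v0 ≠ 0 := by decide +kernel

set_option synthInstance.maxSize 100000 in
set_option synthInstance.maxHeartbeats 1000000 in
set_option maxRecDepth 10000 in
theorem pet10 :
    ∀ v0 ∈ pet, 
    ∀ v1 ∈ pet, v0 &&& v1 = 0 → 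
    ∀ v2 ∈ pet, v1 &&& v2 = 0 → v0 ≠ v2 → 
    ∀ v3 ∈ pet, v2 &&& v3 = 0 → v0 ≠ v3 → v1 ≠ v3 → 
    ∀ v4 ∈ pet, v3 &&& v4 = 0 → v0 ≠ v4 → v1 ≠ v4 → v2 ≠ v4 → 
    ∀ v5 ∈ pet, v4 &&& v5 = 0 → v0 ≠ v5 → v1 ≠ v5 → v2 ≠ v5 → v3 ≠ v5 → 
    ∀ v6 ∈ pet, v5 &&& v6 = 0 → v0 ≠ v6 → v1 ≠ v6 → v2 ≠ v6 → v3 ≠ v6 → v4 ≠ v6 → 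
    ∀ v7 ∈ pet, v6 &&& v7 = 0 → v0 ≠ v7 → v1 ≠ v7 → v2 ≠ v7 → v3 ≠ v7 → v4 ≠ v7 → v5 ≠ v7 → 
    ∀ v8 ∈ pet, v7 &&& v8 = 0 → v0 ≠ v8 → v1 ≠ v8 → v2 ≠ v8 → v3 ≠ v8 → v4 ≠ v8 → v5 ≠ v8 → v6 ≠ v8 → 
    ∀ v9 ∈ pet, v8 &&& v9 = 0 → v0 ≠ v9 → v1 ≠ v9 → v2 ≠ v9 → v3 ≠ v9 → v4 ≠ v9 → v5 ≠ v9 → v6 ≠ v9 → v7 ≠ v9 → 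
    v9 &&& v0 ≠ 0 := by decide +kernel

theorem Cyc.card_le {S : Finset ℕ} {d : ℕ} {g : ℕ → Finset ℕ} (h : Cyc S d g) :
    d ≤ S.card.choose 2 := by
  have h1 : ((Finset.range d).image g) ⊆ S.powersetCard 2 := by
    intro x hx
    obtain ⟨i, hi, rfl⟩ := Finset.mem_image.1 hx
    exact Finset.mem_powersetCard.2 (h.1 i (Finset.mem_range.1 hi))
  have h2 := Finset.card_le_card h1
  rw [Finset.card_powersetCard, Finset.card_image_of_injOn, Finset.card_range] at h2
  · exact h2
  · intro i hi j hj hij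
    by_contra hne
    exact h.2.1 i (by simpa using hi) j (by simpa using hj) hne hij

/-- Few cycle members contain `a` if `{a, b}` is missing. -/
theorem Cyc.count {S : Finset ℕ} {d : ℕ} {g : ℕ → Finset ℕ} (h : Cyc S d g) {a b : ℕ}
    (ha : a ∈ S) (hb : b ∈ S) (hab : a ≠ b) (hA : ∀ i < d, g i ≠ {a, b}) :
    ((Finset.range d).filter (fun i => a ∈ g i)).card ≤ S.card - 2 := by
  have hc : (((S.erase a).erase b).powersetCard 1).card = S.card - 2 := by
    rw [Finset.card_powersetCard, Nat.choose_one_right, Finset.card_erase_of_mem,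
      Finset.card_erase_of_mem ha]
    · omega
    · simp [hb, hab.symm]
  rw [← hc]
  apply Finset.card_le_card_of_injOn (fun i => (g i).erase a)
  · intro i hi
    simp only [Finset.coe_filter, Finset.mem_range, Set.mem_ofPred_eq] at hi
    have hgi := h.1 i hi.1
    simp only [Finset.mem_coe, Finset.mem_powersetCard]
    refine ⟨?_, by rw [Finset.card_erase_of_mem hi.2, hgi.2]⟩
    intro x hx
    have hx' := Finset.mem_erase.1 hx
    refine Finset.mem_erase.2 ⟨?_, Finset.mem_erase.2 ⟨hx'.1, hgi.1 hx'.2⟩⟩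
    rintro rfl
    apply hA i hi.1
    symm
    apply Finset.eq_of_subset_of_card_le
    · intro y hy
      simp only [Finset.mem_insert, Finset.mem_singleton] at hy
      rcases hy with rfl | rfl
      · exact hi.2
      · exact hx'.2
    · rw [hgi.2, Finset.card_pair hab]
  · intro i hi j hj hij
    simp only [Finset.coe_filter, Finset.mem_range, Set.mem_ofPred_eq] at hi hj
    by_contra hne
    apply h.2.1 i hi.1 j hj.1 hne
    have hij' : (g i).erase a = (g j).erase a := hij
    rw [← Finset.insert_erase hi.2, hij', Finset.insert_erase hj.2]

theorem mod_inj {d c i j : ℕ} (hi : i < d) (hj : j < d) (h : (i + c) % d = (j + c) % d) :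
    i = j := by
  have : i ≡ j [MOD d] := Nat.ModEq.add_right_cancel' c h
  rwa [Nat.ModEq, Nat.mod_eq_of_lt hi, Nat.mod_eq_of_lt hj] at this

theorem Cyc.extend {S : Finset ℕ} {d : ℕ} {g : ℕ → Finset ℕ} (h : Cyc S d g)
    (h1 : d < S.card.choose 2) (h2 : 4 * (S.card - 2) < d) : ∃ g', Cyc S (d + 1) g' := by
  have hd : 0 < d := by omega
  obtain ⟨A, hAS, hA⟩ : ∃ A ∈ S.powersetCard 2, A ∉ (Finset.range d).image g := by
    by_contra hcon
    push Not at hcon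
    have := Finset.card_le_card (show S.powersetCard 2 ⊆ (Finset.range d).image g from hcon)
    have h3 := Finset.card_image_le (s := Finset.range d) (f := g)
    rw [Finset.card_powersetCard] at this
    rw [Finset.card_range] at h3
    omega
  obtain ⟨hAS, hA2⟩ := Finset.mem_powersetCard.1 hAS
  have hA' : ∀ i < d, g i ≠ A := fun i hi he =>
    hA (Finset.mem_image.2 ⟨i, Finset.mem_range.2 hi, he⟩)
  obtain ⟨a, b, hab, rfl⟩ := Finset.card_eq_two.1 hA2
  have ha : a ∈ S := hAS (by simp)
  have hb : b ∈ S := hAS (by simp)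
  have ca := h.count ha hb hab hA'
  have cb := h.count hb ha hab.symm (by rw [Finset.pair_comm]; exact hA')
  set B := (Finset.range d).filter (fun i => a ∈ g i) ∪
    (Finset.range d).filter (fun i => b ∈ g i) with hB
  have hBc : B.card ≤ 2 * (S.card - 2) := by
    have := Finset.card_union_le ((Finset.range d).filter (fun i => a ∈ g i))
      ((Finset.range d).filter (fun i => b ∈ g i))
    rw [← hB] at this
    omega
  have hC : ((Finset.range d).filter (fun i => (i + 1) % d ∈ B)).card ≤ B.card := by
    apply Finset.card_le_card_of_injOn (fun i => (i + 1) % d)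
    · intro i hi
      simp only [Finset.coe_filter, Finset.mem_range, Set.mem_ofPred_eq] at hi
      exact hi.2
    · intro i hi j hj hij
      simp only [Finset.coe_filter, Finset.mem_range, Set.mem_ofPred_eq] at hi hj
      exact mod_inj hi.1 hj.1 hij
  obtain ⟨i, hi, hiB⟩ : ∃ i ∈ Finset.range d,
      i ∉ B ∪ (Finset.range d).filter (fun i => (i + 1) % d ∈ B) := by
    by_contra hcon
    push Not at hcon
    have h3 := Finset.card_le_card (show Finset.range d ⊆
      B ∪ (Finset.range d).filter (fun i => (i + 1) % d ∈ B) from hcon)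
    have h4 := Finset.card_union_le B ((Finset.range d).filter (fun i => (i + 1) % d ∈ B))
    rw [Finset.card_range] at h3
    omega
  have hid := Finset.mem_range.1 hi
  have good : ∀ j < d, j ∉ B → Disjoint (g j) {a, b} := by
    intro j hj hjB
    simp only [hB, Finset.mem_union, Finset.mem_filter, Finset.mem_range, hj, true_and,
      not_or] at hjB
    rw [Finset.disjoint_left]
    intro x hx hx'
    simp only [Finset.mem_insert, Finset.mem_singleton] at hx'
    rcases hx' with rfl | rfl
    · exact hjB.1 hx
    · exact hjB.2 hx
  have hml : ∀ x, x % d < d := fun x => Nat.mod_lt _ hd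
  simp only [Finset.mem_union, not_or, Finset.mem_filter, not_and] at hiB
  have g1 := good i hid hiB.1
  have g2 := good _ (hml (i + 1)) (hiB.2 hi)
  refine ⟨fun j => if j < d then g ((j + (i + 1)) % d) else {a, b}, ?_, ?_, ?_⟩
  · intro j _
    by_cases hjd : j < d
    · simp only [hjd, if_true]; exact h.1 _ (hml _)
    · simp only [hjd, if_false]; exact ⟨hAS, hA2⟩
  · intro j hj k hk hjk
    by_cases hjd : j < d <;> by_cases hkd : k < d <;> simp only [hjd, hkd, if_true, if_false]
    · exact h.2.1 _ (hml _) _ (hml _) (fun he => hjk (mod_inj hjd hkd he))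
    · exact hA' _ (hml _)
    · exact (hA' _ (hml _)).symm
    · omega
  · intro j hj
    by_cases hjd : j < d
    · rw [Nat.mod_eq_of_lt (show j + 1 < d + 1 by omega)]
      by_cases hkd : j + 1 < d
      · simp only [hjd, hkd, if_true]
        have := h.2.2 _ (hml (j + (i + 1)))
        rw [Nat.mod_add_mod] at this
        rwa [show j + 1 + (i + 1) = j + (i + 1) + 1 by ring]
      · simp only [hjd, hkd, if_true, if_false]
        have : j + (i + 1) = i + d := by omega
        rw [this, Nat.add_mod_right, Nat.mod_eq_of_lt hid]
        exact g1
    · have : j = d := by omega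
      subst this
      simp only [Nat.mod_self, hd, if_true, lt_irrefl, if_false, Nat.zero_add]
      exact g2.symm

theorem choose_two_mul (n : ℕ) : 2 * (n + 1).choose 2 = (n + 1) * n := by
  rw [Nat.choose_two_right, Nat.add_sub_cancel, mul_comm (n + 1) n]
  exact Nat.mul_div_cancel' (Nat.even_mul_succ_self n).two_dvd

theorem choose_lt {n m d : ℕ} (h : d ≤ n.choose 2) (hm : m.choose 2 < d) : m + 1 ≤ n := by
  by_contra hcon
  have := Nat.choose_le_choose 2 (show n ≤ m by omega)
  omega

theorem cyc_of {n m d : ℕ} (hm : m ≤ n) (h : ∃ g, Cyc (Finset.Icc 1 m) d g) :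
    ∃ g, Cyc (Finset.Icc 1 n) d g := by
  obtain ⟨g, hg⟩ := h
  exact ⟨g, hg.mono (Finset.Icc_subset_Icc_right hm)⟩

theorem cyc_exists (d : ℕ) : ∀ n : ℕ, 11 ≤ d → d ≤ n.choose 2 →
    ∃ g, Cyc (Finset.Icc 1 n) d g := by
  induction d with
  | zero => intro n h; omega
  | succ d ih =>
    intro n h11 hn
    by_cases hbig : d + 1 ≤ 25 ∨ d + 1 = 29
    · have c5 : Nat.choose 5 2 = 10 := rfl
      have c6 : Nat.choose 6 2 = 15 := rfl
      have c7 : Nat.choose 7 2 = 21 := rfl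
      have c8 : Nat.choose 8 2 = 28 := rfl
      rcases hbig with hb | hb
      · have hb' : d ≤ 24 := by omega
        have h10 : 10 ≤ d := by omega
        by_cases d1 : d + 1 ≤ 15
        · have := choose_lt (m := 5) hn (by omega)
          have : d ≤ 14 := by omega
          refine cyc_of (m := 6) (by omega) ?_
          interval_cases d
          · exact cyc_ex11
          · exact cyc_ex12
          · exact cyc_ex13
          · exact cyc_ex14
          · exact cyc_ex15
        by_cases d2 : d + 1 ≤ 21
        · have := choose_lt (m := 6) hn (by omega)
          have : d ≤ 20 := by omega
          have : 15 ≤ d := by omega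
          refine cyc_of (m := 7) (by omega) ?_
          interval_cases d
          · exact cyc_ex16
          · exact cyc_ex17
          · exact cyc_ex18
          · exact cyc_ex19
          · exact cyc_ex20
          · exact cyc_ex21
        · have := choose_lt (m := 7) hn (by omega)
          have : 21 ≤ d := by omega
          refine cyc_of (m := 8) (by omega) ?_
          interval_cases d
          · exact cyc_ex22
          · exact cyc_ex23
          · exact cyc_ex24
          · exact cyc_ex25
      · have := choose_lt (m := 8) hn (by omega)
        rw [hb]
        exact cyc_of this cyc_ex29
    · have hex : ∃ n : ℕ, d + 1 ≤ n.choose 2 := ⟨n, hn⟩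
      classical
      set N := Nat.find hex with hN
      have hN1 : d + 1 ≤ N.choose 2 := Nat.find_spec hex
      have hNn : N ≤ n := Nat.find_min' hex hn
      have h8 : 8 ≤ N := choose_lt (m := 7) hN1 (by
        have : Nat.choose 7 2 = 21 := rfl
        omega)
      have hmin : ¬ (d + 1 ≤ (N - 1).choose 2) := Nat.find_min hex (by omega)
      refine cyc_of hNn ?_
      obtain ⟨g, hg⟩ := ih N (by omega) (by omega)
      refine hg.extend (by simpa using hN1) ?_
      rw [Nat.card_Icc]
      obtain ⟨M, hM⟩ : ∃ M, N = M + 2 := ⟨N - 2, by omega⟩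
      have h3 := choose_two_mul M
      rw [hM, show M + 2 - 1 = M + 1 by omega] at hmin
      by_cases h9 : 8 ≤ M
      · have : 9 * M ≤ (M + 1) * M := Nat.mul_le_mul_right _ (by omega)
        omega
      · by_cases h7 : M = 7
        · subst h7; omega
        · have : M = 6 := by omega
          subst this; omega

theorem wheel_hub {d : ℕ} (i : Fin d) : (wheelGraph d).Adj none (some i) := by
  simp [wheelGraph]

theorem wheel_rim {d : ℕ} (i j : Fin d) :
    (wheelGraph d).Adj (some i) (some j) ↔ (SimpleGraph.cycleGraph d).Adj i j := by
  simp only [wheelGraph, SimpleGraph.fromRel_adj]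
  constructor
  · rintro ⟨_, (h | ⟨a, b, ha, hb, h⟩) | (h | ⟨a, b, ha, hb, h⟩)⟩
    · simp at h
    · simp only [Option.some.injEq] at ha hb; subst ha; subst hb; exact h
    · simp at h
    · simp only [Option.some.injEq] at ha hb; subst ha; subst hb; exact h.symm
  · intro h
    exact ⟨by simpa using h.ne, Or.inl (Or.inr ⟨i, j, rfl, rfl, h⟩)⟩

theorem cycle_adj {d : ℕ} (hd : 3 ≤ d) (i j : Fin d) :
    (SimpleGraph.cycleGraph d).Adj i j ↔
      (j.val = (i.val + 1) % d ∨ i.val = (j.val + 1) % d) := by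
  rw [SimpleGraph.cycleGraph_adj']
  have key : ∀ a b : Fin d, (a - b).val = 1 ↔ a.val = (b.val + 1) % d := by
    intro a b
    have ha := a.isLt
    have hb := b.isLt
    rw [Fin.sub_def]
    simp only
    by_cases h1 : b.val ≤ a.val
    · rw [show d - b.val + a.val = (a.val - b.val) + d by omega, Nat.add_mod_right,
        Nat.mod_eq_of_lt (by omega)]
      by_cases h2 : b.val + 1 < d
      · rw [Nat.mod_eq_of_lt h2]; omega
      · rw [show b.val + 1 = d by omega, Nat.mod_self]; omega
    · rw [Nat.mod_eq_of_lt (by omega)]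
      by_cases h2 : b.val + 1 < d
      · rw [Nat.mod_eq_of_lt h2]; omega
      · rw [show b.val + 1 = d by omega, Nat.mod_self]; omega
  rw [key, key, or_comm]

theorem coloring_of_cyc {n d : ℕ} (hd : 3 ≤ d) {g : ℕ → Finset ℕ}
    (h : Cyc (Finset.Icc 1 n) d g) :
    ∃ f, IsTToneColoring (wheelGraph d) 2 (n + 2) f := by
  have hdis : ∀ i < d, Disjoint ({n + 1, n + 2} : Finset ℕ) (g i) := by
    intro i hi
    rw [Finset.disjoint_left]
    intro x hx hx'
    have := Finset.mem_Icc.1 ((h.1 i hi).1 hx')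
    simp only [Finset.mem_insert, Finset.mem_singleton] at hx
    omega
  have hadj : ∀ i j : Fin d, (SimpleGraph.cycleGraph d).Adj i j → Disjoint (g i) (g j) := by
    intro i j hij
    rcases (cycle_adj hd i j).1 hij with hh | hh
    · rw [hh]; exact h.2.2 _ i.isLt
    · rw [hh]; exact (h.2.2 _ j.isLt).symm
  refine ⟨fun v => v.elim {n + 1, n + 2} (fun i => g i), ?_, ?_⟩
  · rintro (_ | i)
    · simp only [Option.elim]
      refine ⟨?_, Finset.card_pair (by omega)⟩
      intro x hx
      simp only [Finset.mem_insert, Finset.mem_singleton] at hx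
      rw [Finset.mem_Icc]; omega
    · simp only [Option.elim]
      exact ⟨(h.1 i i.isLt).1.trans (Finset.Icc_subset_Icc_right (by omega)), (h.1 i i.isLt).2⟩
  · intro u v huv hr
    have hpos := hr.pos_dist_of_ne huv
    by_cases hA : (wheelGraph d).Adj u v
    · rw [SimpleGraph.dist_eq_one_iff_adj.2 hA, Nat.lt_one_iff, Finset.card_eq_zero,
        ← Finset.disjoint_iff_inter_eq_empty]
      rcases u with _ | i <;> rcases v with _ | j
      · exact absurd rfl huv
      · exact hdis j j.isLt
      · exact (hdis i i.isLt).symm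
      · exact hadj i j ((wheel_rim i j).1 hA)
    · have h1 : (wheelGraph d).dist u v ≠ 1 := fun hh => hA (SimpleGraph.dist_eq_one_iff_adj.1 hh)
      rcases u with _ | i <;> rcases v with _ | j
      · exact absurd rfl huv
      · exact absurd (wheel_hub j) hA
      · exact absurd (wheel_hub i).symm hA
      · have hne : g i ≠ g j := h.2.1 i i.isLt j j.isLt (fun hh => huv (by rw [Fin.ext hh]))
        have : (g i ∩ g j).card < 2 := by
          by_contra hcon
          have ci := (h.1 i i.isLt).2
          have cj := (h.1 j j.isLt).2
          have e1 := Finset.eq_of_subset_of_card_le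
            (Finset.inter_subset_left (s₁ := g i) (s₂ := g j)) (by omega)
          have e2 := Finset.eq_of_subset_of_card_le
            (Finset.inter_subset_right (s₁ := g i) (s₂ := g j)) (by omega)
          exact hne (e1.symm.trans e2)
        simp only [Option.elim]
        omega

theorem cyc_of_coloring {k d : ℕ} (hd : 3 ≤ d) {f : Option (Fin d) → Finset ℕ}
    (h : IsTToneColoring (wheelGraph d) 2 k f) :
    ∃ S : Finset ℕ, S.card + 2 = k ∧ ∃ g, Cyc S d g := by
  have hadj : ∀ u v, (wheelGraph d).Adj u v → Disjoint (f u) (f v) := by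
    intro u v huv
    have := h.2 u v huv.ne huv.reachable
    rwa [SimpleGraph.dist_eq_one_iff_adj.2 huv, Nat.lt_one_iff, Finset.card_eq_zero,
        ← Finset.disjoint_iff_inter_eq_empty] at this
  have hne : ∀ i j : Fin d, i ≠ j → f (some i) ≠ f (some j) := by
    intro i j hij he
    let w : (wheelGraph d).Walk (some i) (some j) :=
      .cons (wheel_hub i).symm (.cons (wheel_hub j) .nil)
    have h1 := h.2 (some i) (some j) (by simpa using hij) w.reachable
    have h2 : (wheelGraph d).dist (some i) (some j) ≤ 2 := SimpleGraph.dist_le w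
    rw [he, Finset.inter_self, (h.1 (some j)).2] at h1
    omega
  refine ⟨Finset.Icc 1 k \ f none, ?_,
    fun i => f (some ⟨i % d, Nat.mod_lt _ (by omega)⟩), ?_, ?_, ?_⟩
  · have := Finset.card_sdiff_add_card_eq_card (h.1 none).1
    rw [(h.1 none).2] at this
    simpa using this
  · intro i hi
    refine ⟨?_, (h.1 _).2⟩
    rw [Finset.subset_sdiff]
    exact ⟨(h.1 _).1, (hadj _ _ (wheel_hub _)).symm⟩
  · intro i hi j hj hij
    apply hne
    simp only [ne_eq, Fin.mk.injEq, Nat.mod_eq_of_lt hi, Nat.mod_eq_of_lt hj]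
    exact hij
  · intro i hi
    apply hadj
    rw [wheel_rim, cycle_adj hd]
    left
    simp

theorem Cyc.four {S : Finset ℕ} {d : ℕ} (hd : 3 ≤ d) {g : ℕ → Finset ℕ} (h : Cyc S d g) :
    5 ≤ S.card := by
  by_contra hcon
  have h0 := h.1 0 (by omega)
  have h1 := h.1 1 (by omega)
  have h2 := h.1 2 (by omega)
  have d01 := h.2.2 0 (by omega)
  have d12 := h.2.2 1 (by omega)
  rw [Nat.mod_eq_of_lt (by omega)] at d01 d12
  simp only [Nat.zero_add, Nat.reduceAdd] at d01 d12
  have hc := Finset.card_sdiff_add_card_eq_card h1.1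
  have e0 := Finset.eq_of_subset_of_card_le (Finset.subset_sdiff.2 ⟨h0.1, d01⟩) (by omega)
  have e2 := Finset.eq_of_subset_of_card_le (Finset.subset_sdiff.2 ⟨h2.1, d12.symm⟩) (by omega)
  exact h.2.1 0 (by omega) 2 (by omega) (by omega) (e0.trans e2.symm)

def enc (s : Finset (Fin 5)) : ℕ := ∑ i ∈ s, 2 ^ i.val

theorem enc_mem : ∀ s : Finset (Fin 5), s.card = 2 → enc s ∈ pet := by decide +kernel

theorem enc_disj : ∀ s t : Finset (Fin 5), Disjoint s t → enc s &&& enc t = 0 := by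
  decide +kernel

theorem enc_inj : ∀ s t : Finset (Fin 5), s ≠ t → enc s ≠ enc t := by
  decide +kernel

theorem Cyc.toPet {S : Finset ℕ} {d : ℕ} {g : ℕ → Finset ℕ} (h : Cyc S d g)
    (hS : S.card ≤ 5) : ∃ v : ℕ → ℕ, (∀ i < d, v i ∈ pet) ∧
      (∀ i < d, ∀ j < d, i ≠ j → v i ≠ v j) ∧ (∀ i < d, v i &&& v ((i + 1) % d) = 0) := by
  obtain ⟨e⟩ : Nonempty (S ↪ Fin 5) :=
    Function.Embedding.nonempty_of_card_le (by simpa using hS)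
  let φ : ℕ → Fin 5 := fun x => if hx : x ∈ S then e ⟨x, hx⟩ else 0
  have hφ : Set.InjOn φ S := by
    intro x hx y hy hxy
    simp only [Finset.mem_coe] at hx hy
    simp only [φ, hx, hy, dif_pos] at hxy
    simpa using e.injective hxy
  refine ⟨fun i => enc ((g i).image φ), ?_, ?_, ?_⟩
  · intro i hi
    apply enc_mem
    rw [Finset.card_image_of_injOn (hφ.mono (by exact_mod_cast (h.1 i hi).1)), (h.1 i hi).2]
  · intro i hi j hj hij
    apply enc_inj
    intro he
    apply h.2.1 i hi j hj hij
    have h1 := (h.1 i hi).1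
    have h2 := (h.1 j hj).1
    ext x
    constructor
    · intro hx
      obtain ⟨y, hy, hyx⟩ := Finset.mem_image.1 (he ▸ Finset.mem_image_of_mem φ hx)
      rwa [← hφ (h2 hy) (h1 hx) hyx]
    · intro hx
      obtain ⟨y, hy, hyx⟩ := Finset.mem_image.1 (he.symm ▸ Finset.mem_image_of_mem φ hx)
      rwa [← hφ (h1 hy) (h2 hx) hyx]
  · intro i hi
    apply enc_disj
    have hi' : (i + 1) % d < d := Nat.mod_lt _ (by omega)
    rw [Finset.disjoint_left]
    intro x hx hx'
    obtain ⟨y, hy, rfl⟩ := Finset.mem_image.1 hx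
    obtain ⟨z, hz, hzy⟩ := Finset.mem_image.1 hx'
    have := hφ ((h.1 _ hi').1 hz) ((h.1 i hi).1 hy) hzy
    subst this
    exact Finset.disjoint_left.1 (h.2.2 i hi) hy hz

theorem pet_no {d : ℕ} (hd : d = 3 ∨ d = 4 ∨ d = 7 ∨ d = 10) {v : ℕ → ℕ}
    (h1 : ∀ i < d, v i ∈ pet) (h2 : ∀ i < d, ∀ j < d, i ≠ j → v i ≠ v j)
    (h3 : ∀ i < d, v i &&& v ((i + 1) % d) = 0) : False := by
  rcases hd with rfl | rfl | rfl | rfl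
  · refine pet3 (v 0) ?_ (v 1) ?_ ?_ (v 2) ?_ ?_ ?_ (h3 2 (by omega)) <;>
    first
    | exact h1 _ (by omega)
    | exact h2 _ (by omega) _ (by omega) (by omega)
    | exact h3 _ (by omega)
  · refine pet4 (v 0) ?_ (v 1) ?_ ?_ (v 2) ?_ ?_ ?_ (v 3) ?_ ?_ ?_ ?_ (h3 3 (by omega)) <;>
    first
    | exact h1 _ (by omega)
    | exact h2 _ (by omega) _ (by omega) (by omega)
    | exact h3 _ (by omega)
  · refine pet7 (v 0) ?_ (v 1) ?_ ?_ (v 2) ?_ ?_ ?_ (v 3) ?_ ?_ ?_ ?_ (v 4) ?_ ?_ ?_ ?_ ?_ (v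
      5) ?_ ?_ ?_ ?_ ?_ ?_ (v 6) ?_ ?_ ?_ ?_ ?_ ?_ ?_ (h3 6 (by omega)) <;>
    first
    | exact h1 _ (by omega)
    | exact h2 _ (by omega) _ (by omega) (by omega)
    | exact h3 _ (by omega)
  · refine pet10 (v 0) ?_ (v 1) ?_ ?_ (v 2) ?_ ?_ ?_ (v 3) ?_ ?_ ?_ ?_ (v 4) ?_ ?_ ?_ ?_ ?_ (v
      5) ?_ ?_ ?_ ?_ ?_ ?_ (v 6) ?_ ?_ ?_ ?_ ?_ ?_ ?_ (v 7) ?_ ?_ ?_ ?_ ?_ ?_ ?_ ?_ (v 8) ?_ ?_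
      ?_ ?_ ?_ ?_ ?_ ?_ ?_ (v 9) ?_ ?_ ?_ ?_ ?_ ?_ ?_ ?_ ?_ ?_ (h3 9 (by omega)) <;>
    first
    | exact h1 _ (by omega)
    | exact h2 _ (by omega) _ (by omega) (by omega)
    | exact h3 _ (by omega)

theorem tone_eq_s10 {d k : ℕ} (hd : 3 ≤ d) (hup : ∃ g, Cyc (Finset.Icc 1 k) d g)
    (hlow : ∀ (S : Finset ℕ) g, Cyc S d g → k ≤ S.card) :
    toneNumber (wheelGraph d) 2 = k + 2 := by
  apply IsLeast.csInf_eq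
  constructor
  · obtain ⟨g, hg⟩ := hup
    exact coloring_of_cyc hd hg
  · rintro m ⟨f, hf⟩
    obtain ⟨S, hS, g, hg⟩ := cyc_of_coloring hd hf
    have := hlow S g hg
    omega

theorem low6 {d : ℕ} (hd : d = 3 ∨ d = 4 ∨ d = 7 ∨ 10 ≤ d) (S : Finset ℕ) (g : ℕ → Finset ℕ)
    (h : Cyc S d g) : 6 ≤ S.card := by
  by_cases h10 : 10 < d
  · exact choose_lt (m := 5) h.card_le h10
  by_contra hcon
  obtain ⟨v, h1, h2, h3⟩ := h.toPet (by omega)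
  exact pet_no (by omega) h1 h2 h3

/-- The 2-tone chromatic number of the wheel `W_d` (`d ≥ 3`):
7 for `d ∈ {5,6,8,9}`; 8 for `d ∈ {3,4,7}` or `10 ≤ d ≤ 15`;
and `⌈(5 + √(1+8d))/2⌉` for `d ≥ 11`. -/
theorem stmt10 (d : ℕ) (hd : 3 ≤ d) :
    ((d = 5 ∨ d = 6 ∨ d = 8 ∨ d = 9) → toneNumber (wheelGraph d) 2 = 7) ∧
    ((d = 3 ∨ d = 4 ∨ d = 7 ∨ (10 ≤ d ∧ d ≤ 15)) → toneNumber (wheelGraph d) 2 = 8) ∧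
    (11 ≤ d → toneNumber (wheelGraph d) 2 =
      ⌈(5 + Real.sqrt (1 + 8 * (d : ℝ))) / 2⌉₊) := by
  refine ⟨?_, ?_, ?_⟩
  · intro h
    refine tone_eq_s10 (k := 5) hd ?_ (fun S g hg => hg.four hd)
    rcases h with rfl | rfl | rfl | rfl
    · exact cyc_ex5
    · exact cyc_ex6
    · exact cyc_ex8
    · exact cyc_ex9
  · intro h
    refine tone_eq_s10 (k := 6) hd ?_ (low6 (by omega))
    by_cases h11 : 11 ≤ d
    · exact cyc_exists d 6 h11 (by
        have : Nat.choose 6 2 = 15 := rfl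
        omega)
    · obtain rfl | rfl | rfl | rfl : d = 3 ∨ d = 4 ∨ d = 7 ∨ d = 10 := by omega
      · exact cyc_ex3
      · exact cyc_ex4
      · exact cyc_ex7
      · exact cyc_ex10
  · intro h11
    have hdR : (11 : ℝ) ≤ d := by exact_mod_cast h11
    set s := Real.sqrt (1 + 8 * (d : ℝ)) with hs
    have hs2 : s ^ 2 = 1 + 8 * (d : ℝ) := Real.sq_sqrt (by positivity)
    have hs0 : 0 ≤ s := Real.sqrt_nonneg _
    have hs9 : 9 < s := by nlinarith
    set K := ⌈(5 + s) / 2⌉₊ with hK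
    have hKle : (5 + s) / 2 ≤ K := Nat.le_ceil _
    have hK7 : 7 < K := by
      have : (7 : ℝ) < K := by linarith
      exact_mod_cast this
    obtain ⟨M, hM⟩ : ∃ M, K = M + 1 + 2 := ⟨K - 3, by omega⟩
    rw [hM]
    have hKM : (K : ℝ) = M + 3 := by rw [hM]; push_cast; ring
    refine tone_eq_s10 hd (cyc_exists d _ h11 ?_) ?_
    · have h3 := choose_two_mul M
      have h4 : (2 * d : ℝ) ≤ (M + 1) * M := by
        have : s ≤ 2 * M + 1 := by linarith
        nlinarith
      have h5 : 2 * d ≤ (M + 1) * M := by exact_mod_cast h4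
      omega
    · intro S g hg
      have h1 := hg.card_le
      have h5 := hg.four hd
      obtain ⟨m, hm⟩ : ∃ m, S.card = m + 1 := ⟨S.card - 1, by omega⟩
      rw [hm] at h1 ⊢
      have h3 := choose_two_mul m
      have h4 : 2 * d ≤ (m + 1) * m := by omega
      have h6 : (2 * d : ℝ) ≤ (m + 1) * m := by exact_mod_cast h4
      have h7 : s ≤ 2 * m + 1 := by
        apply Real.sqrt_le_iff.2
        constructor
        · positivity
        · nlinarith
      have h8 : K ≤ m + 3 := by
        apply Nat.ceil_le.2
        push_cast
        linarith
      omega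
end

section
/- Let G be the simple graph on vertex set {v₁, v₂, v₃, v₄, v₅} with edge set {v₁v₂, v₂v₃, v₁v₃, v₂v₅, v₅v₄, v₄v₃}. Then G admits no 3-tone 10-coloring; equivalently, τ₃(G) ≥ 11. -/
/-- The graph on `{v₁,…,v₅}` (as `Fin 5`, with `vᵢ = i - 1`) with edges
`v₁v₂, v₂v₃, v₁v₃, v₂v₅, v₅v₄, v₄v₃`. -/
def counterexampleGraph : SimpleGraph (Fin 5) :=
  SimpleGraph.fromEdgeSet {s(0, 1), s(1, 2), s(0, 2), s(1, 4), s(4, 3), s(3, 2)}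

theorem no_ten (f : Fin 5 → Finset ℕ) : ¬ IsTToneColoring counterexampleGraph 3 10 f := by
  rintro ⟨h1, h2⟩
  have adj : ∀ u v : Fin 5, u ≠ v → counterexampleGraph.Adj u v → (f u ∩ f v).card = 0 := by
    intro u v huv h
    have h3 := h2 u v huv h.reachable
    rw [SimpleGraph.dist_eq_one_iff_adj.mpr h] at h3
    omega
  have two : ∀ u w v : Fin 5, u ≠ v → counterexampleGraph.Adj u w → counterexampleGraph.Adj w v →
      (f u ∩ f v).card ≤ 1 := by
    intro u w v huv h h'
    have h3 := h2 u v huv (h.reachable.trans h'.reachable)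
    have h4 := SimpleGraph.dist_le (SimpleGraph.Walk.cons h (SimpleGraph.Walk.cons h' SimpleGraph.Walk.nil))
    simp at h4
    omega
  have a01 := adj 0 1 (by decide) (by simp [counterexampleGraph])
  have a02 := adj 0 2 (by decide) (by simp [counterexampleGraph])
  have a12 := adj 1 2 (by decide) (by simp [counterexampleGraph])
  have a32 := adj 3 2 (by decide) (by simp [counterexampleGraph])
  have a41 := adj 4 1 (by decide) (by simp [counterexampleGraph])
  have a34 := adj 3 4 (by decide) (by simp [counterexampleGraph])
  have b30 := two 3 2 0 (by decide) (by simp [counterexampleGraph]) (by simp [counterexampleGraph])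
  have b31 := two 3 2 1 (by decide) (by simp [counterexampleGraph]) (by simp [counterexampleGraph])
  have b40 := two 4 1 0 (by decide) (by simp [counterexampleGraph]) (by simp [counterexampleGraph])
  have b42 := two 4 1 2 (by decide) (by simp [counterexampleGraph]) (by simp [counterexampleGraph])
  have hU : (f 0 ∪ f 1 ∪ f 2).card = 9 := by
    have e1 := Finset.card_union_add_card_inter (f 0) (f 1)
    have e2 := Finset.card_union_add_card_inter (f 0 ∪ f 1) (f 2)
    have e3 := Finset.card_union_le (f 0 ∩ f 2) (f 1 ∩ f 2)
    rw [← Finset.union_inter_distrib_right] at e3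
    have := (h1 0).2
    have := (h1 1).2
    have := (h1 2).2
    omega
  have key : ∀ v, (f v ∩ f 0).card + (f v ∩ f 1).card + (f v ∩ f 2).card ≤ 2 →
      1 ≤ (f v \ (f 0 ∪ f 1 ∪ f 2)).card := by
    intro v hv
    have e := Finset.card_sdiff_add_card_inter (f v) (f 0 ∪ f 1 ∪ f 2)
    rw [Finset.inter_union_distrib_left, Finset.inter_union_distrib_left] at e
    have e1 := Finset.card_union_le (f v ∩ f 0 ∪ f v ∩ f 1) (f v ∩ f 2)
    have e2 := Finset.card_union_le (f v ∩ f 0) (f v ∩ f 1)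
    have := (h1 v).2
    omega
  have k3 := key 3 (by omega)
  have k4 := key 4 (by omega)
  have hE : (Finset.Icc 1 10 \ (f 0 ∪ f 1 ∪ f 2)).card = 1 := by
    rw [Finset.card_sdiff_of_subset, hU]
    · simp
    · exact Finset.union_subset (Finset.union_subset (h1 0).1 (h1 1).1) (h1 2).1
  obtain ⟨x, hx⟩ := Finset.card_eq_one.mp hE
  have fin : ∀ v, 1 ≤ (f v \ (f 0 ∪ f 1 ∪ f 2)).card → x ∈ f v := by
    intro v hv
    obtain ⟨y, hy⟩ := Finset.card_pos.mp hv
    have hy' := Finset.sdiff_subset_sdiff (h1 v).1 (Finset.Subset.refl (f 0 ∪ f 1 ∪ f 2)) hy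
    rw [hx, Finset.mem_singleton] at hy'
    subst hy'
    exact (Finset.mem_sdiff.mp hy).1
  have : x ∈ f 3 ∩ f 4 := Finset.mem_inter.mpr ⟨fin 3 k3, fin 4 k4⟩
  rw [Finset.card_eq_zero.mp a34] at this
  simp at this

theorem exists_coloring : ∃ f : Fin 5 → Finset ℕ, IsTToneColoring counterexampleGraph 3 15 f := by
  refine ⟨fun v => {3 * v.val + 1, 3 * v.val + 2, 3 * v.val + 3}, ?_, ?_⟩
  · decide
  · intro u v huv h
    have h0 := h.pos_dist_of_ne huv
    have h3 : ∀ u v : Fin 5, u ≠ v →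
      ((({3 * u.val + 1, 3 * u.val + 2, 3 * u.val + 3} : Finset ℕ) ∩
        {3 * v.val + 1, 3 * v.val + 2, 3 * v.val + 3}).card = 0) := by decide
    have := h3 u v huv
    simp only [this]
    exact h0

/-- The above graph admits no 3-tone 10-coloring; equivalently `τ₃(G) ≥ 11`. -/
theorem stmt11 :
    (¬ ∃ f : Fin 5 → Finset ℕ, IsTToneColoring counterexampleGraph 3 10 f) ∧
    11 ≤ toneNumber counterexampleGraph 3 := by
  refine ⟨fun ⟨f, hf⟩ => no_ten f hf, ?_⟩
  by_contra hlt
  have hm : toneNumber counterexampleGraph 3 ∈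
      {k | ∃ f : Fin 5 → Finset ℕ, IsTToneColoring counterexampleGraph 3 k f} :=
    Nat.sInf_mem ⟨15, exists_coloring⟩
  obtain ⟨f, hf1, hf2⟩ := hm
  refine no_ten f ⟨fun v => ⟨(hf1 v).1.trans (Finset.Icc_subset_Icc_right (by omega)), (hf1 v).2⟩, hf2⟩
end

section
/- If a finite simple graph G contains K₄ − e as a subgraph, then τ₂(G) ≥ 7. -/
/-- The complete graph on four vertices with one edge removed. -/
def K4minusE : SimpleGraph (Fin 4) :=
  SimpleGraph.fromEdgeSet {s(0, 1), s(0, 2), s(0, 3), s(1, 2), s(1, 3)}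

/-- If a finite simple graph `G` contains `K₄ − e` as a subgraph, then `τ₂(G) ≥ 7`. -/
theorem stmt13 {V : Type*} [Fintype V] (G : SimpleGraph V)
    (h : ∃ φ : Fin 4 ↪ V, ∀ u v : Fin 4, K4minusE.Adj u v → G.Adj (φ u) (φ v)) :
    7 ≤ toneNumber G 2 := by
  obtain ⟨φ, hφ⟩ := h
  have adj : ∀ u v : Fin 4, s(u, v) ∈ ({s(0, 1), s(0, 2), s(0, 3), s(1, 2), s(1, 3)} : Set (Sym2 (Fin 4))) →
      u ≠ v → G.Adj (φ u) (φ v) := by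
    intro u v h1 h2
    apply hφ
    unfold K4minusE
    rw [SimpleGraph.fromEdgeSet_adj]
    exact ⟨h1, h2⟩
  have a01 : G.Adj (φ 0) (φ 1) := adj 0 1 (by simp) (by decide)
  have a02 : G.Adj (φ 0) (φ 2) := adj 0 2 (by simp) (by decide)
  have a03 : G.Adj (φ 0) (φ 3) := adj 0 3 (by simp) (by decide)
  have a12 : G.Adj (φ 1) (φ 2) := adj 1 2 (by simp) (by decide)
  have a13 : G.Adj (φ 1) (φ 3) := adj 1 3 (by simp) (by decide)
  unfold toneNumber
  apply le_csInf
  · let e := Fintype.equivFin V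
    refine ⟨2 * Fintype.card V, fun v => {2 * (e v).val + 1, 2 * (e v).val + 2}, ?_, ?_⟩
    · intro v
      have := (e v).isLt
      refine ⟨?_, Finset.card_pair (by omega)⟩
      intro x hx
      simp only [Finset.mem_insert, Finset.mem_singleton] at hx
      rw [Finset.mem_Icc]
      omega
    · intro u v huv hr
      have hpos := hr.pos_dist_of_ne huv
      have hne : (e u).val ≠ (e v).val := fun hh => huv (e.injective (Fin.ext hh))
      have : Disjoint ({2 * (e u).val + 1, 2 * (e u).val + 2} : Finset ℕ)
          {2 * (e v).val + 1, 2 * (e v).val + 2} := by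
        rw [Finset.disjoint_left]
        intro x hx hy
        simp only [Finset.mem_insert, Finset.mem_singleton] at hx hy
        omega
      rw [Finset.disjoint_iff_inter_eq_empty.mp this]
      simpa using hpos
  · rintro k ⟨f, hf, hd⟩
    have disj : ∀ u v, G.Adj u v → Disjoint (f u) (f v) := by
      intro u v huv
      have h1 := hd u v huv.ne huv.reachable
      rw [SimpleGraph.dist_eq_one_iff_adj.mpr huv] at h1
      rw [Finset.disjoint_iff_inter_eq_empty]
      exact Finset.card_eq_zero.mp (by omega)
    have h23 : (f (φ 2) ∩ f (φ 3)).card < 2 := by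
      have hne : φ 2 ≠ φ 3 := fun hh => absurd (φ.injective hh) (by decide)
      let w : G.Walk (φ 2) (φ 3) := .cons a02.symm (.cons a03 .nil)
      have hw : G.dist (φ 2) (φ 3) ≤ 2 := SimpleGraph.dist_le w
      exact lt_of_lt_of_le (hd _ _ hne w.reachable) hw
    have hu := Finset.card_union_add_card_inter (f (φ 2)) (f (φ 3))
    have h01 := Finset.card_union_of_disjoint (disj _ _ a01)
    have hD : Disjoint (f (φ 0) ∪ f (φ 1)) (f (φ 2) ∪ f (φ 3)) := by
      simp only [Finset.disjoint_union_left, Finset.disjoint_union_right]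
      exact ⟨⟨disj _ _ a02, disj _ _ a12⟩, ⟨disj _ _ a03, disj _ _ a13⟩⟩
    have hall := Finset.card_union_of_disjoint hD
    have hsub : (f (φ 0) ∪ f (φ 1)) ∪ (f (φ 2) ∪ f (φ 3)) ⊆ Finset.Icc 1 k :=
      Finset.union_subset (Finset.union_subset (hf _).1 (hf _).1)
        (Finset.union_subset (hf _).1 (hf _).1)
    have hc := Finset.card_le_card hsub
    rw [Nat.card_Icc] at hc
    have c0 := (hf (φ 0)).2
    have c1 := (hf (φ 1)).2
    have c2 := (hf (φ 2)).2
    have c3 := (hf (φ 3)).2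
    omega
end

section
/- If a finite simple graph G contains a cycle of length 3, 4, or 7 as a subgraph, then τ₂(G) ≥ 6. -/
def toneCode (s : Finset ℕ) : ℕ := s.sum (fun i => 2 ^ i)

def toneP : List ℕ := [6, 10, 18, 34, 12, 20, 36, 24, 40, 48]

lemma toneCode_mem : ∀ s ∈ Finset.powersetCard 2 (Finset.Icc 1 5), toneCode s ∈ toneP := by
  decide +kernel

lemma toneCode_disj : ∀ s ∈ Finset.powersetCard 2 (Finset.Icc 1 5),
    ∀ t ∈ Finset.powersetCard 2 (Finset.Icc 1 5), (s ∩ t).card < 1 →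
      toneCode s &&& toneCode t = 0 := by
  decide +kernel

lemma toneCode_ne : ∀ s ∈ Finset.powersetCard 2 (Finset.Icc 1 5),
    ∀ t ∈ Finset.powersetCard 2 (Finset.Icc 1 5), (s ∩ t).card < 2 →
      toneCode s ≠ toneCode t := by
  decide +kernel

lemma tone3 : ∀ a ∈ toneP, ∀ b ∈ toneP, a &&& b = 0 → ∀ c ∈ toneP, b &&& c = 0 →
    c &&& a = 0 → False := by
  decide +kernel

lemma tone4 : ∀ a ∈ toneP, ∀ b ∈ toneP, a &&& b = 0 → ∀ c ∈ toneP, b &&& c = 0 → a ≠ c →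
    ∀ d ∈ toneP, c &&& d = 0 → b ≠ d → d &&& a = 0 → False := by
  decide +kernel

lemma tone7 : ∀ a ∈ toneP, ∀ b ∈ toneP, a &&& b = 0 → ∀ c ∈ toneP, b &&& c = 0 → a ≠ c →
    ∀ d ∈ toneP, c &&& d = 0 → b ≠ d → ∀ e ∈ toneP, d &&& e = 0 → c ≠ e →
    ∀ f ∈ toneP, e &&& f = 0 → d ≠ f → ∀ g ∈ toneP, f &&& g = 0 → e ≠ g →
    g &&& a = 0 → f ≠ a → g ≠ b → False := by
  decide +kernel

lemma tone_exists {V : Type*} [Fintype V] (G : SimpleGraph V) :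
    ∃ k, ∃ f : V → Finset ℕ, IsTToneColoring G 2 k f := by
  classical
  let e := Fintype.equivFin V
  refine ⟨2 * Fintype.card V, fun v => {2 * (e v : ℕ) + 1, 2 * (e v : ℕ) + 2}, ?_, ?_⟩
  · intro v
    refine ⟨?_, Finset.card_pair (by omega)⟩
    intro x hx
    have := (e v).2
    simp only [Finset.mem_insert, Finset.mem_singleton] at hx
    rw [Finset.mem_Icc]
    omega
  · intro u v huv hr
    have h1 : (e u : ℕ) ≠ e v := fun h => huv (e.injective (Fin.ext h))
    have h2 := hr.pos_dist_of_ne huv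
    have h3 : (({2 * (e u : ℕ) + 1, 2 * (e u : ℕ) + 2} : Finset ℕ) ∩
        {2 * (e v : ℕ) + 1, 2 * (e v : ℕ) + 2}) = ∅ := by
      ext x
      simp only [Finset.mem_inter, Finset.mem_insert, Finset.mem_singleton, Finset.notMem_empty,
        iff_false]
      omega
    simpa [h3] using h2

/-- If a finite simple graph `G` contains a cycle of length 3, 4, or 7 as a
subgraph, then `τ₂(G) ≥ 6`. -/
theorem stmt14 {V : Type*} [Fintype V] (G : SimpleGraph V)
    (h : ∃ n : ℕ, (n = 3 ∨ n = 4 ∨ n = 7) ∧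
      ∃ φ : Fin n ↪ V, ∀ u v : Fin n,
        (SimpleGraph.cycleGraph n).Adj u v → G.Adj (φ u) (φ v)) :
    6 ≤ toneNumber G 2 := by
  refine le_csInf (tone_exists G) ?_
  rintro k ⟨f, hf, hd⟩
  by_contra hk
  have hmem : ∀ v, f v ∈ Finset.powersetCard 2 (Finset.Icc 1 5) := fun v =>
    Finset.mem_powersetCard.2
      ⟨(hf v).1.trans (Finset.Icc_subset_Icc le_rfl (by omega)), (hf v).2⟩
  have hP : ∀ v, toneCode (f v) ∈ toneP := fun v => toneCode_mem _ (hmem v)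
  have hA : ∀ u v, G.Adj u v → toneCode (f u) &&& toneCode (f v) = 0 := by
    intro u v huv
    have := hd u v huv.ne huv.reachable
    rw [SimpleGraph.dist_eq_one_iff_adj.2 huv] at this
    exact toneCode_disj _ (hmem u) _ (hmem v) this
  have hN : ∀ u w v, G.Adj u w → G.Adj w v → u ≠ v → toneCode (f u) ≠ toneCode (f v) := by
    intro u w v h1 h2 huv
    have h3 := hd u v huv (h1.reachable.trans h2.reachable)
    have h4 : G.dist u v ≤ 2 :=
      SimpleGraph.dist_le (SimpleGraph.Walk.cons h1 (SimpleGraph.Walk.cons h2 .nil))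
    exact toneCode_ne _ (hmem u) _ (hmem v) (by omega)
  obtain ⟨n, hn, φ, hφ⟩ := h
  have hne : ∀ i j, i ≠ j → φ i ≠ φ j := fun i j hij h => hij (φ.injective h)
  rcases hn with rfl | rfl | rfl
  · have a : ∀ i : Fin 3, G.Adj (φ i) (φ (i + 1)) := fun i => hφ _ _ (by decide +revert)
    exact tone3 _ (hP (φ 0)) _ (hP (φ 1)) (hA _ _ (a 0)) _ (hP (φ 2)) (hA _ _ (a 1))
      (hA _ _ (a 2))
  · have a : ∀ i : Fin 4, G.Adj (φ i) (φ (i + 1)) := fun i => hφ _ _ (by decide +revert)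
    have b : ∀ i : Fin 4, toneCode (f (φ i)) ≠ toneCode (f (φ (i + 1 + 1))) := fun i =>
      hN _ _ _ (a i) (a (i + 1)) (hne _ _ (by decide +revert))
    exact tone4 _ (hP (φ 0)) _ (hP (φ 1)) (hA _ _ (a 0)) _ (hP (φ 2)) (hA _ _ (a 1)) (b 0)
      _ (hP (φ 3)) (hA _ _ (a 2)) (b 1) (hA _ _ (a 3))
  · have a : ∀ i : Fin 7, G.Adj (φ i) (φ (i + 1)) := fun i => hφ _ _ (by decide +revert)
    have b : ∀ i : Fin 7, toneCode (f (φ i)) ≠ toneCode (f (φ (i + 1 + 1))) := fun i =>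
      hN _ _ _ (a i) (a (i + 1)) (hne _ _ (by decide +revert))
    exact tone7 _ (hP (φ 0)) _ (hP (φ 1)) (hA _ _ (a 0)) _ (hP (φ 2)) (hA _ _ (a 1)) (b 0)
      _ (hP (φ 3)) (hA _ _ (a 2)) (b 1) _ (hP (φ 4)) (hA _ _ (a 3)) (b 2)
      _ (hP (φ 5)) (hA _ _ (a 4)) (b 3) _ (hP (φ 6)) (hA _ _ (a 5)) (b 4)
      (hA _ _ (a 6)) (b 5) (b 6)
end

section
/- Let G be a finite simple graph, let v be a vertex of G, and let k be a positive integer with k ≥ 2·deg(v) + 2. Suppose f assigns to every vertex u ≠ v a 2-element subset f(u) of {1,…,k} such that |f(u) ∩ f(w)| < d_G(u,w) for all distinct u, w ≠ v in the same component. If the binomial coefficient C(k − 2·deg(v), 2) is strictly greater than the number of vertices at distance exactly two from v in G, then f extends to a 2-tone k-coloring of G by assigning v a 2-element subset of {1,…,k} disjoint from the labels of all neighbors of v and distinct from the label of every vertex at distance exactly two from v. -/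
/-- Extension lemma for partial 2-tone colorings: if `f` is a partial 2-tone
`k`-coloring defined on all vertices other than `v`, with `k ≥ 2·deg(v) + 2`,
and the number of candidate labels `C(k − 2·deg(v), 2)` exceeds the number of
vertices at distance exactly two from `v`, then `f` extends to a 2-tone
`k`-coloring of `G` by assigning `v` a 2-element subset of `{1,…,k}` disjoint
from the labels of all neighbors of `v` and distinct from the label of every
vertex at distance exactly two from `v`. -/
theorem stmt16 {V : Type*} [Fintype V] [DecidableEq V] (G : SimpleGraph V)
    [DecidableRel G.Adj] (v : V) (k : ℕ) (hk : 2 * G.degree v + 2 ≤ k)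
    (f : V → Finset ℕ)
    (hlab : ∀ u : V, u ≠ v → f u ⊆ Finset.Icc 1 k ∧ (f u).card = 2)
    (hpart : ∀ u w : V, u ≠ w → u ≠ v → w ≠ v → G.Reachable u w →
      ((f u) ∩ (f w)).card < G.dist u w)
    (hcount : Nat.card {u : V // G.dist v u = 2} < (k - 2 * G.degree v).choose 2) :
    ∃ s : Finset ℕ, s ⊆ Finset.Icc 1 k ∧ s.card = 2 ∧
      (∀ u : V, G.Adj v u → s ∩ f u = ∅) ∧
      (∀ u : V, G.dist v u = 2 → s ≠ f u) ∧
      IsTToneColoring G 2 k (Function.update f v s) := by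
  classical
  have key : ∃ s : Finset ℕ, s ⊆ Finset.Icc 1 k ∧ s.card = 2 ∧
      (∀ u : V, G.Adj v u → s ∩ f u = ∅) ∧ (∀ u : V, G.dist v u = 2 → s ≠ f u) := by
    set F : Finset ℕ := Finset.Icc 1 k \ (G.neighborFinset v).biUnion f with hF
    have hB : ((G.neighborFinset v).biUnion f).card ≤ G.degree v * 2 := by
      rw [← G.card_neighborFinset_eq_degree v]
      apply Finset.card_biUnion_le_card_mul
      intro u hu
      rw [SimpleGraph.mem_neighborFinset] at hu
      exact (hlab u hu.ne').2.le
    have hFc : k - 2 * G.degree v ≤ F.card := by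
      have h := Finset.le_card_sdiff ((G.neighborFinset v).biUnion f) (Finset.Icc 1 k)
      rw [Nat.card_Icc] at h
      have h' : k + 1 - 1 - ((G.neighborFinset v).biUnion f).card ≤ F.card := h
      omega
    have hD : ((Finset.univ.filter (fun u : V => G.dist v u = 2)).image f).card
        < (F.powersetCard 2).card := by
      rw [Finset.card_powersetCard]
      refine lt_of_le_of_lt Finset.card_image_le (lt_of_lt_of_le ?_ (Nat.choose_le_choose 2 hFc))
      rw [← Fintype.card_subtype, ← Nat.card_eq_fintype_card]
      exact hcount
    obtain ⟨s, hs, hs'⟩ := Finset.exists_mem_notMem_of_card_lt_card hD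
    rw [Finset.mem_powersetCard] at hs
    refine ⟨s, hs.1.trans Finset.sdiff_subset, hs.2, ?_, ?_⟩
    · intro u hu
      rw [← Finset.disjoint_iff_inter_eq_empty, Finset.disjoint_left]
      intro a ha hau
      have h := hs.1 ha
      rw [hF, Finset.mem_sdiff] at h
      exact h.2 (Finset.mem_biUnion.2 ⟨u, (G.mem_neighborFinset v u).2 hu, hau⟩)
    · rintro u hu rfl
      exact hs' (Finset.mem_image.2 ⟨u, by simp [hu], rfl⟩)
  obtain ⟨s, h1, h2, h3, h4⟩ := key
  have main : ∀ u, u ≠ v → G.Reachable v u → (s ∩ f u).card < G.dist v u := by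
    intro u hu hr
    have hpos : 0 < G.dist v u := hr.pos_dist_of_ne hu.symm
    have hle : (s ∩ f u).card ≤ 2 := h2 ▸ Finset.card_le_card Finset.inter_subset_left
    rcases Nat.lt_or_ge 2 (G.dist v u) with h | h
    · omega
    · rcases (show G.dist v u = 1 ∨ G.dist v u = 2 by omega) with h | h
      · rw [h3 u (SimpleGraph.dist_eq_one_iff_adj.1 h), h]
        simp
      · rw [h]
        refine lt_of_le_of_ne hle fun he => h4 u h ?_
        have e1 : s ∩ f u = s := Finset.eq_of_subset_of_card_le Finset.inter_subset_left (by omega)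
        have e2 : s ∩ f u = f u :=
          Finset.eq_of_subset_of_card_le Finset.inter_subset_right (by rw [(hlab u hu).2, he])
        exact e1.symm.trans e2
  refine ⟨s, h1, h2, h3, h4, ?_, ?_⟩
  · intro u
    by_cases hu : u = v
    · subst hu
      simpa using ⟨h1, h2⟩
    · simpa [Function.update_of_ne hu] using hlab u hu
  · intro u w huw hr
    by_cases hu : u = v
    · subst hu
      rw [Function.update_self, Function.update_of_ne huw.symm]
      exact main w huw.symm hr
    · by_cases hw : w = v
      · subst hw
        rw [Function.update_self, Function.update_of_ne hu, Finset.inter_comm, SimpleGraph.dist_comm]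
        exact main u hu hr.symm
      · rw [Function.update_of_ne hu, Function.update_of_ne hw]
        exact hpart u w huw hu hw hr
end
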